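/- arXiv:2209.05742 — 8 statements merged into one kernel-verified Lean document; each statement's English description precedes it below -/
import Mathlib

section
/- Every continuous game possesses a mixed strategy Nash equilibrium: there exists a mixed strategy profile σ = (σ_p)_{p∈P} such that for every player p and every pure strategy s_p ∈ S_p, U_p(δ_{s_p}, σ_{−p}) ≤ U_p(σ), where (δ_{s_p}, σ_{−p}) is the profile obtained from σ by replacing σ_p with the Dirac measure at s_p. -/
open MeasureTheory

/-!
A mixed profile `σ` is an equilibrium as soon as no pure profile `y` satisfies
`∑ p, U p (y p, σ₋ₚ) > ∑ p, U p σ`: the players other than `p` can always be given pure strategies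
that do no worse than their mixed ones, so a profitable deviation of `p` yields such a `y`.

By compactness of the space of mixed profiles it is enough to find, for any finite family `y i` of
pure profiles, a `σ` that satisfies the inequality against each `y i`. Let all players mix their
components of the `y i` with common weights `z i`; then `∑ p, U p σ` is the `z`-average of the left
hand sides `g i z`, and the claim is that some `z` in the simplex satisfies
`g j z ≤ ∑ i, z i * g i z` for all `j`. This holds if `i` maximises `g · z` whenever `z i ≠ 0`, so
the matter is to find, for a closed cover `G i` of the simplex, a point `z` that lies in `G i`
whenever `z i ≠ 0`. Such a point is a limit of the sets provided by Scarf's combinatorial lemma,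
applied to finite subsets of the simplex ranked by their coordinates and labelled by the cover.
Scarf's lemma is itself a parity count in the style of Sperner's lemma, with dominant sets in place
of the cells of a triangulation.
-/

section Combinatorics

open Finset

variable {X ι : Type*} [DecidableEq ι]

theorem image_erase_eq_image_iff [DecidableEq X] {s : Finset X} {f : X → ι} {a : X} (ha : a ∈ s) :
    (s.erase a).image f = s.image f ↔ f a ∈ (s.erase a).image f := by
  rw [eq_comm, ← insert_eq_self, ← image_insert, insert_erase ha]

theorem card_filter_mem_image_erase [DecidableEq X] {s : Finset X} {f : X → ι}
    (hs : #s = #(s.image f) + 1) :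
    #{a ∈ s | f a ∈ (s.erase a).image f} = 2 := by
  obtain ⟨a, ha, b, hb, hab, hfab⟩ : ∃ a ∈ s, ∃ b ∈ s, a ≠ b ∧ f a = f b :=
    exists_ne_map_eq_of_card_lt_of_maps_to (by omega) fun x hx ↦ mem_image_of_mem f hx
  have ha' : f a ∈ (s.erase a).image f :=
    mem_image.2 ⟨b, mem_erase.2 ⟨hab.symm, hb⟩, hfab.symm⟩
  have hb' : f b ∈ (s.erase b).image f := mem_image.2 ⟨a, mem_erase.2 ⟨hab, ha⟩, hfab⟩
  have hinj : Set.InjOn f (s.erase a) := by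
    rw [← card_image_iff, (image_erase_eq_image_iff ha).2 ha', card_erase_of_mem ha]
    omega
  suffices {x ∈ s | f x ∈ (s.erase x).image f} = {a, b} by rw [this, card_pair hab]
  ext x
  simp only [mem_filter, mem_insert, mem_singleton]
  refine ⟨fun ⟨hx, hfx⟩ ↦ ?_, by rintro (rfl | rfl) <;> exact ⟨‹_›, ‹_›⟩⟩
  obtain ⟨y, hy, hyx⟩ := mem_image.1 hfx
  obtain ⟨hne, hy⟩ := mem_erase.1 hy
  by_contra! hx'
  have hxa : x ∈ s.erase a := mem_erase.2 ⟨hx'.1, hx⟩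
  obtain rfl | hya := eq_or_ne y a
  · exact hx'.2 (hinj hxa (mem_erase.2 ⟨hab.symm, hb⟩) (hyx.symm.trans hfab))
  · exact hne (hinj (mem_erase.2 ⟨hya, hy⟩) hxa hyx)

variable [Fintype X]

open scoped Classical in
theorem card_filter_covBy_image_eq {B : Finset X} {c : X → ι} (hB : #B = #(B.image c) + 1) :
    #{D | D ⋖ B ∧ D.image c = B.image c} = 2 := by
  rw [← card_filter_mem_image_erase hB, eq_comm]
  refine card_bij (fun a _ ↦ B.erase a) (fun a ha ↦ ?_) (fun a ha b hb hab ↦ ?_) fun D hD ↦ ?_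
  · obtain ⟨ha, hca⟩ := mem_filter.1 ha
    simpa using ⟨covBy_iff_exists_erase.2 ⟨a, ha, rfl⟩, (image_erase_eq_image_iff ha).2 hca⟩
  · exact erase_injOn B (mem_filter.1 ha).1 (mem_filter.1 hb).1 hab
  · obtain ⟨hDB, hcD⟩ := (mem_filter_univ _).1 hD
    obtain ⟨a, ha, rfl⟩ := covBy_iff_exists_erase.1 hDB
    exact ⟨a, mem_filter.2 ⟨ha, (image_erase_eq_image_iff ha).1 hcD⟩, rfl⟩

variable [Fintype ι]

open scoped Classical in
theorem even_card_filter_covBy_image_eq_erase {B : Finset X} {c : X → ι} (i₀ : ι)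
    (hB : #B = Fintype.card ι) (hc : B.image c ≠ univ) :
    Even #{D | D ⋖ B ∧ D.image c = univ.erase i₀} := by
  have hcB : ∀ D, D ⋖ B → D.image c = univ.erase i₀ → B.image c = univ.erase i₀ := by
    intro D hDB hD
    have hsub : univ.erase i₀ ⊆ B.image c := hD ▸ image_mono c hDB.le
    refine (subset_erase.2 ⟨subset_univ _, fun hi₀ ↦ hc ?_⟩).antisymm hsub
    rw [← univ_subset_iff, ← insert_erase (mem_univ i₀)]
    exact insert_subset hi₀ hsub
  by_cases h : B.image c = univ.erase i₀
  · have hcard : #B = #(B.image c) + 1 := by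
      rw [h, card_erase_add_one (mem_univ i₀), card_univ, hB]
    rw [← h, card_filter_covBy_image_eq hcard]
    exact even_two
  · rw [filter_false_of_mem fun D _ (hD : _ ∧ _) ↦ h (hcB D hD.1 hD.2), card_empty]
    exact Even.zero

open scoped Classical in
/-- Sperner's parity argument: a `B` that misses a colour has an even number of facets `D` coloured
`univ.erase i₀`, so counting the pairs `D ⋖ B` from the other side makes the sum even. -/
theorem exists_image_eq_univ_of_odd_sum (p : Finset X → Prop) (c : X → ι) (i₀ : ι)
    (hodd : Odd (∑ D with #D + 1 = Fintype.card ι ∧ D.image c = univ.erase i₀,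
      #{B | D ⋖ B ∧ p B})) :
    ∃ B, p B ∧ B.image c = univ := by
  by_contra! hp
  let doors : Finset (Finset X) := {D | #D + 1 = Fintype.card ι ∧ D.image c = univ.erase i₀}
  let rooms : Finset (Finset X) := {B | p B ∧ #B = Fintype.card ι}
  have hcovers : ∀ D ∈ doors,
      ({B | D ⋖ B ∧ p B} : Finset _) = rooms.bipartiteAbove (· ⋖ ·) D := by
    intro D hD
    ext B
    simp only [rooms, mem_filter_univ, mem_bipartiteAbove, ← ((mem_filter_univ _).1 hD).1]
    exact ⟨fun ⟨hDB, hB⟩ ↦ ⟨⟨hB, (Nat.covBy_iff_add_one_eq.1 hDB.card_finset).symm⟩, hDB⟩,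
      fun ⟨⟨hB, _⟩, hDB⟩ ↦ ⟨hDB, hB⟩⟩
  have hfacets : ∀ B ∈ rooms,
      doors.bipartiteBelow (· ⋖ ·) B = ({D | D ⋖ B ∧ D.image c = univ.erase i₀} : Finset _) := by
    intro B hB
    ext D
    simp only [doors, mem_filter_univ, mem_bipartiteBelow, ← ((mem_filter_univ _).1 hB).2]
    exact ⟨fun ⟨⟨_, hD⟩, hDB⟩ ↦ ⟨hDB, hD⟩,
      fun ⟨hDB, hD⟩ ↦ ⟨⟨Nat.covBy_iff_add_one_eq.1 hDB.card_finset, hD⟩, hDB⟩⟩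
  refine Nat.not_even_iff_odd.2 hodd ?_
  rw [sum_congr rfl fun D hD ↦ congrArg card (hcovers D hD),
    sum_card_bipartiteAbove_eq_sum_card_bipartiteBelow]
  refine even_sum _ fun B hB ↦ ?_
  rw [hfacets B hB]
  obtain ⟨hpB, hB⟩ := (mem_filter_univ _).1 hB
  exact even_card_filter_covBy_image_eq_erase i₀ hB (hp B hpB)

end Combinatorics

section Dominance

open Finset

variable {X ι α : Type*} [LinearOrder α]

/-- A finite set `B` is dominant (in Scarf's sense) for the rankings `ρ i` if no point of `X` ranks,
for every `i` at once, strictly above the `ρ i`-lowest element of `B`. -/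
def IsDominant (ρ : ι → X → α) (B : Finset X) : Prop :=
  ∀ y, ∃ i, ∀ b ∈ B, ρ i y ≤ ρ i b

/-- `m i` is the `ρ i`-lowest element of `D`, for every `i`. -/
def IsMinSelection (ρ : ι → X → α) (D : Finset X) (m : ι → X) : Prop :=
  ∀ i, m i ∈ D ∧ ∀ b ∈ D, ρ i (m i) ≤ ρ i b

/-- `z` ranks strictly above the thresholds `m l` for all `l ≠ k` and is `ρ k`-highest among the
points doing so. When `m` selects the minima of a dominant set `D`, adding such a peak to `D` is
the pivot step of Scarf's algorithm. -/
def IsPeak (ρ : ι → X → α) (m : ι → X) (k : ι) (z : X) : Prop :=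
  (∀ l ≠ k, ρ l (m l) < ρ l z) ∧ ∀ y, (∀ l ≠ k, ρ l (m l) < ρ l y) → ρ k y ≤ ρ k z

variable {ρ : ι → X → α} {B D : Finset X} {m : ι → X} {k k' : ι} {z z' : X}

theorem IsDominant.mono (hB : IsDominant ρ B) (hDB : D ⊆ B) : IsDominant ρ D := fun y ↦
  (hB y).imp fun _ hi b hb ↦ hi b (hDB hb)

theorem exists_isMinSelection (ρ : ι → X → α) (hD : D.Nonempty) : ∃ m, IsMinSelection ρ D m := by
  choose m hm using fun i ↦ D.exists_min_image (ρ i) hD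
  exact ⟨m, hm⟩

theorem IsMinSelection.isDominant_iff (hm : IsMinSelection ρ D m) :
    IsDominant ρ D ↔ ∀ y, ∃ i, ρ i y ≤ ρ i (m i) :=
  forall_congr' fun _ ↦ exists_congr fun i ↦
    ⟨fun h ↦ h (m i) (hm i).1, fun h b hb ↦ h.trans ((hm i).2 b hb)⟩

theorem IsMinSelection.image_eq [Fintype ι] [DecidableEq X] (hm : IsMinSelection ρ D m)
    (hρ : ∀ i, (ρ i).Injective) (hD : IsDominant ρ D) : univ.image m = D := by
  refine (image_subset_iff.2 fun i _ ↦ (hm i).1).antisymm fun d hd ↦ ?_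
  obtain ⟨i, hi⟩ := hm.isDominant_iff.1 hD d
  exact mem_image.2 ⟨i, mem_univ i, hρ i (((hm i).2 d hd).antisymm hi)⟩

theorem exists_isPeak [Finite X] (h : ∃ y, ∀ l ≠ k, ρ l (m l) < ρ l y) : ∃ z, IsPeak ρ m k z :=
  Set.exists_max_image {y | ∀ l ≠ k, ρ l (m l) < ρ l y} (ρ k) (Set.toFinite _) h

theorem IsPeak.eq (hρ : (ρ k).Injective) (hz : IsPeak ρ m k z) (hz' : IsPeak ρ m k z') : z = z' :=
  hρ ((hz'.2 z hz.1).antisymm (hz.2 z' hz'.1))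

theorem IsPeak.le_of_isDominant (hm : IsMinSelection ρ D m) (hD : IsDominant ρ D)
    (hz : IsPeak ρ m k z) : ρ k z ≤ ρ k (m k) := by
  obtain ⟨l, hl⟩ := hm.isDominant_iff.1 hD z
  obtain rfl | hlk := eq_or_ne l k
  · exact hl
  · exact absurd (hz.1 l hlk) hl.not_gt

theorem IsPeak.index_eq (hm : IsMinSelection ρ D m) (hD : IsDominant ρ D)
    (hz : IsPeak ρ m k z) (hz' : IsPeak ρ m k' z) : k = k' := by
  by_contra hne
  exact (hz'.1 k hne).not_ge (hz.le_of_isDominant hm hD)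

theorem IsPeak.isDominant_insert [DecidableEq X] (hm : IsMinSelection ρ D m)
    (hD : IsDominant ρ D) (hz : IsPeak ρ m k z) : IsDominant ρ (insert z D) := by
  intro y
  simp only [forall_mem_insert]
  by_cases hy : ∀ l ≠ k, ρ l (m l) < ρ l y
  · have hzk := hz.2 y hy
    exact ⟨k, hzk, fun b hb ↦ (hzk.trans (hz.le_of_isDominant hm hD)).trans ((hm k).2 b hb)⟩
  · push Not at hy
    obtain ⟨l, hlk, hl⟩ := hy
    exact ⟨l, hl.trans (hz.1 l hlk).le, fun b hb ↦ hl.trans ((hm l).2 b hb)⟩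

theorem IsPeak.notMem [Finite ι] (hm : IsMinSelection ρ D m) (hρ : ∀ i, (ρ i).Injective)
    (hD : IsDominant ρ D) (hz : IsPeak ρ m k z) (hkk' : k' ≠ k) (hmk : m k' = m k) : z ∉ D := by
  classical
  cases nonempty_fintype ι
  rw [← hm.image_eq hρ hD, mem_image]
  rintro ⟨l, -, rfl⟩
  obtain rfl | hlk := eq_or_ne l k
  · exact (hz.1 k' hkk').ne (by rw [hmk])
  · exact (hz.1 l hlk).false

variable [Fintype ι]

theorem exists_isPeak_of_isDominant_insert [DecidableEq X] (hm : IsMinSelection ρ D m)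
    (hρ : ∀ i, (ρ i).Injective) (hcard : #D + 1 = Fintype.card ι) (hzD : z ∉ D)
    (hB : IsDominant ρ (insert z D)) : ∃ k, IsPeak ρ m k z ∧ ∃ k' ≠ k, m k' = m k := by
  obtain ⟨n, hn⟩ := exists_isMinSelection ρ (insert_nonempty z D)
  have himage : univ.image n = insert z D := hn.image_eq hρ hB
  have hinj : n.Injective := by
    rw [← Set.injOn_univ, ← coe_univ, ← card_image_iff, himage, card_insert_of_notMem hzD, hcard,
      card_univ]
  obtain ⟨k, -, rfl⟩ := mem_image.1 (himage ▸ mem_insert_self z D)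
  have hnm : ∀ l ≠ k, n l = m l := by
    intro l hlk
    have hl : n l ∈ D := mem_of_mem_insert_of_ne (hn l).1 (hinj.ne hlk)
    exact hρ l (((hn l).2 _ (mem_insert_of_mem (hm l).1)).antisymm ((hm l).2 _ hl))
  refine ⟨k, ⟨fun l hlk ↦ ?_, fun y hy ↦ ?_⟩, ?_⟩
  · rw [← hnm l hlk]
    exact ((hn l).2 _ (mem_insert_self _ D)).lt_of_ne ((hρ l).ne (hinj.ne hlk))
  · obtain ⟨l, hl⟩ := hn.isDominant_iff.1 hB y
    obtain rfl | hlk := eq_or_ne l k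
    · exact hl
    · exact absurd (hy l hlk) (hnm l hlk ▸ hl.not_gt)
  · obtain ⟨k', -, hk'⟩ := mem_image.1 (himage ▸ mem_insert_of_mem (hm k).1)
    have hne : k' ≠ k := by
      rintro rfl
      exact hzD (hk' ▸ (hm k').1)
    exact ⟨k', hne, by rw [← hnm k' hne, hk']⟩

open scoped Classical in
theorem card_filter_covBy_isDominant_eq_two [Fintype X] (hρ : ∀ i, (ρ i).Injective)
    (hcard : #D + 1 = Fintype.card ι) (hne : D.Nonempty) (hD : IsDominant ρ D)
    (hunbdd : ∀ i, ∃ y, ∀ l ≠ i, ∃ b ∈ D, ρ l b < ρ l y) :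
    #{B | D ⋖ B ∧ IsDominant ρ B} = 2 := by
  obtain ⟨m, hm⟩ := exists_isMinSelection ρ hne
  have hpeak : ∀ k, ∃ z, IsPeak ρ m k z := fun k ↦
    exists_isPeak <| (hunbdd k).imp fun y hy l hl ↦
      let ⟨b, hb, hlt⟩ := hy l hl
      ((hm l).2 b hb).trans_lt hlt
  choose z hz using hpeak
  have hrepeat : ∀ k, m k ∈ (univ.erase k).image m ↔ ∃ k' ≠ k, m k' = m k := by simp
  have hz_notMem : ∀ k, m k ∈ (univ.erase k).image m → z k ∉ D := by
    intro k hk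
    obtain ⟨k', hkk', hmk⟩ := (hrepeat k).1 hk
    exact (hz k).notMem hm hρ hD hkk' hmk
  have hcard' : #(univ : Finset ι) = #(univ.image m) + 1 := by
    rw [hm.image_eq hρ hD, hcard, card_univ]
  rw [← card_filter_mem_image_erase hcard', eq_comm]
  refine card_bij (fun k _ ↦ insert (z k) D) (fun k hk ↦ ?_) (fun k hk l _ hkl ↦ ?_)
    fun B hB ↦ ?_
  · exact mem_filter.2 ⟨mem_univ _, covBy_iff_exists_insert.2
      ⟨z k, hz_notMem k (mem_filter.1 hk).2, rfl⟩, (hz k).isDominant_insert hm hD⟩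
  · have hzkl : z k = z l := (insert_inj (hz_notMem k (mem_filter.1 hk).2)).1 hkl
    exact (hz k).index_eq hm hD (hzkl ▸ hz l)
  · obtain ⟨hDB, hB⟩ := (mem_filter_univ _).1 hB
    obtain ⟨x, hxD, rfl⟩ := covBy_iff_exists_insert.1 hDB
    obtain ⟨k, hk, hrep⟩ := exists_isPeak_of_isDominant_insert hm hρ hcard hxD hB
    exact ⟨k, mem_filter.2 ⟨mem_univ k, (hrepeat k).2 hrep⟩, by rw [(hz k).eq (hρ k) hk]⟩

open scoped Classical in
theorem even_card_filter_covBy_isDominant [Fintype X] (hρ : ∀ i, (ρ i).Injective)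
    (hcard : #D + 1 = Fintype.card ι) (hne : D.Nonempty)
    (hunbdd : ∀ i, ∃ y, ∀ l ≠ i, ∃ b ∈ D, ρ l b < ρ l y) :
    Even #{B | D ⋖ B ∧ IsDominant ρ B} := by
  by_cases hD : IsDominant ρ D
  · rw [card_filter_covBy_isDominant_eq_two hρ hcard hne hD hunbdd]
    exact even_two
  · rw [filter_false_of_mem fun B _ hB ↦ hD (hB.2.mono hB.1.le), card_empty]
    exact Even.zero

end Dominance

section Slack

open Finset

variable {T ι α : Type*} [Fintype ι] [DecidableEq ι]

/-- The rankings `ρ i` of `T`, extended to `T` together with one slack element `Sum.inr j` for each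
index `j`: the slack element `j` comes last in the ranking `j` and before all of `T` in the other
rankings. The values `Fintype.equivFin ι j` merely keep the extended rankings injective. -/
noncomputable def slackRank (ρ : ι → T → α) (i : ι) :
    T ⊕ ι → WithBot (α ⊕ₗ Fin (Fintype.card ι))
  | .inl t => WithBot.some (Sum.inlₗ (ρ i t))
  | .inr j => if j = i then ⊥ else WithBot.some (Sum.inrₗ (Fintype.equivFin ι j))

variable {ρ : ι → T → α} {i j : ι} {s t : T}

theorem slackRank_inr_self : slackRank ρ i (.inr i) = ⊥ := by
  simp [slackRank]

theorem slackRank_injective (hρ : (ρ i).Injective) : (slackRank ρ i).Injective := by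
  rintro (s | j) (t | k) h
  · simpa [slackRank, hρ.eq_iff] using h
  · by_cases hk : k = i <;> simp [slackRank, hk] at h
  · by_cases hj : j = i <;> simp [slackRank, hj] at h
  · by_cases hj : j = i <;> by_cases hk : k = i <;> simp_all [slackRank]

variable [LinearOrder α]

theorem slackRank_inl_le_inl : slackRank ρ i (.inl s) ≤ slackRank ρ i (.inl t) ↔ ρ i s ≤ ρ i t := by
  simp [slackRank]

theorem slackRank_inr_self_lt_inl : slackRank ρ i (.inr i) < slackRank ρ i (.inl t) := by
  simp [slackRank]

theorem slackRank_inl_lt_inr (hij : i ≠ j) :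
    slackRank ρ i (.inl t) < slackRank ρ i (.inr j) := by
  simp [slackRank, hij.symm]

open scoped Classical in
theorem isDominant_insert_inl_image_inr_iff {i₀ : ι} :
    IsDominant (slackRank ρ) (insert (.inl t) ((univ.erase i₀).image Sum.inr)) ↔
      ∀ s, ρ i₀ s ≤ ρ i₀ t := by
  refine ⟨fun h s ↦ ?_, fun h y ↦ ?_⟩
  · obtain ⟨i, hi⟩ := h (.inl s)
    obtain rfl : i = i₀ := by
      by_contra hne
      exact slackRank_inr_self_lt_inl.not_ge (hi (.inr i) (by simp [hne]))
    exact slackRank_inl_le_inl.1 (hi _ (mem_insert_self _ _))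
  · rcases y with s | j
    · refine ⟨i₀, forall_mem_insert _ _ _ |>.2 ⟨slackRank_inl_le_inl.2 (h s), ?_⟩⟩
      simp only [forall_mem_image, mem_erase]
      exact fun j hj ↦ (slackRank_inl_lt_inr hj.1.symm).le
    · exact ⟨j, fun b _ ↦ slackRank_inr_self.trans_le bot_le⟩

open scoped Classical in
theorem even_card_filter_covBy_isDominant_of_inl_mem [Fintype T] (hρ : ∀ i, (ρ i).Injective)
    {D : Finset (T ⊕ ι)} (hcard : #D + 1 = Fintype.card ι) (ht : .inl t ∈ D) :
    Even #{B | D ⋖ B ∧ IsDominant (slackRank ρ) B} :=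
  even_card_filter_covBy_isDominant (fun i ↦ slackRank_injective (hρ i)) hcard ⟨_, ht⟩
    fun i ↦ ⟨.inr i, fun _ hl ↦ ⟨.inl t, ht, slackRank_inl_lt_inr hl⟩⟩

open scoped Classical in
theorem card_filter_covBy_image_inr_isDominant [Fintype T] [Nonempty T] {i₀ : ι}
    (hρ : (ρ i₀).Injective) :
    #{B | (univ.erase i₀).image Sum.inr ⋖ B ∧ IsDominant (slackRank ρ) B} = 1 := by
  obtain ⟨t, ht⟩ := Finite.exists_max (ρ i₀)
  rw [card_eq_one]
  refine ⟨insert (.inl t) ((univ.erase i₀).image .inr), ?_⟩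
  ext B
  simp only [mem_filter_univ, mem_singleton]
  refine ⟨fun ⟨hcov, hB⟩ ↦ ?_, ?_⟩
  · obtain ⟨s | j, hx, rfl⟩ := covBy_iff_exists_insert.1 hcov
    · have hs := isDominant_insert_inl_image_inr_iff.1 hB
      rw [hρ ((ht s).antisymm (hs t))]
    · obtain ⟨i, hi⟩ := hB (.inl t)
      obtain rfl : j = i₀ := by simpa using hx
      refine absurd (hi (.inr i) ?_) slackRank_inr_self_lt_inl.not_ge
      obtain rfl | hne := eq_or_ne i j <;> simp [*]
  · rintro rfl
    exact ⟨covBy_iff_exists_insert.2 ⟨.inl t, by simp, rfl⟩,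
      isDominant_insert_inl_image_inr_iff.2 ht⟩

theorem exists_isDominant_image_eq_univ [Finite T] [Nonempty T] [Nonempty ι]
    (hρ : ∀ i, (ρ i).Injective) (c : T → ι) :
    ∃ B, IsDominant (slackRank ρ) B ∧ B.image (Sum.elim c id) = univ := by
  classical
  cases nonempty_fintype T
  obtain ⟨i₀⟩ := ‹Nonempty ι›
  let D₀ : Finset (T ⊕ ι) := (univ.erase i₀).image .inr
  have hD₀ : D₀ ∈ ({D | #D + 1 = Fintype.card ι ∧ D.image (Sum.elim c id) = univ.erase i₀} :
      Finset _) := by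
    rw [mem_filter_univ, card_image_of_injective _ Sum.inr_injective, image_image,
      Sum.elim_comp_inr, image_id]
    exact ⟨card_erase_add_one (mem_univ i₀), rfl⟩
  refine exists_image_eq_univ_of_odd_sum _ _ i₀ ?_
  rw [← add_sum_erase _ _ hD₀, card_filter_covBy_image_inr_isDominant (hρ i₀)]
  refine odd_one.add_even (even_sum _ fun D hD ↦ ?_)
  obtain ⟨hne, hD⟩ := mem_erase.1 hD
  obtain ⟨hcard, hcD⟩ := (mem_filter_univ _).1 hD
  obtain ⟨t, ht⟩ : ∃ t, .inl t ∈ D := by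
    by_contra! hinl
    refine hne ?_
    ext (t | j)
    · simp [D₀, hinl t]
    · simpa [D₀, hinl] using Finset.ext_iff.1 hcD j
  exact even_card_filter_covBy_isDominant_of_inl_mem hρ hcard ht

end Slack

section Scarf

variable {K ι α : Type*} [Finite ι] [LinearOrder α]

theorem exists_label_eq_forall_exists_le_of_injective [Finite K] [Nonempty K]
    (ρ : ι → K → α) (hρ : ∀ i, (ρ i).Injective) (c : K → ι) :
    ∃ (C : Set ι) (x : ι → K), (∀ i ∈ C, c (x i) = i) ∧
      ∀ y, ∃ i ∈ C, ∀ j ∈ C, ρ i y ≤ ρ i (x j) := by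
  classical
  have := Fintype.ofFinite ι
  have : Nonempty ι := ‹Nonempty K›.map c
  obtain ⟨B, hB, hcB⟩ := exists_isDominant_image_eq_univ hρ c
  let C : Set ι := {i | ∃ t, .inl t ∈ B ∧ c t = i}
  have hC : ∀ i ∈ C, ∃ t, .inl t ∈ B ∧ c t = i := fun _ hi ↦ hi
  choose! x hxB hcx using hC
  refine ⟨C, x, hcx, fun y ↦ ?_⟩
  obtain ⟨i, hi⟩ := hB (.inl y)
  refine ⟨i, ?_, fun j hj ↦ slackRank_inl_le_inl.1 (hi _ (hxB j hj))⟩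
  obtain ⟨t | j, hb, hcb⟩ := Finset.mem_image.1 (hcB ▸ Finset.mem_univ i)
  · exact ⟨t, hb, hcb⟩
  · obtain rfl : j = i := hcb
    exact absurd slackRank_inr_self_lt_inl (hi _ hb).not_gt

theorem exists_label_eq_forall_exists_le [Finite K] [Nonempty K] (w : ι → K → α) (c : K → ι) :
    ∃ (C : Set ι) (x : ι → K), (∀ i ∈ C, c (x i) = i) ∧
      ∀ y, ∃ i ∈ C, ∀ j ∈ C, w i y ≤ w i (x j) := by
  obtain ⟨n, ⟨e⟩⟩ := Finite.exists_equiv_fin K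
  have hρ : ∀ i, (fun t ↦ toLex (w i t, e t)).Injective := fun i s t h ↦
    e.injective (Prod.ext_iff.1 (toLex.injective h)).2
  obtain ⟨C, x, hcx, hx⟩ := exists_label_eq_forall_exists_le_of_injective _ hρ c
  exact ⟨C, x, hcx, fun y ↦ (hx y).imp fun i ⟨hi, h⟩ ↦
    ⟨hi, fun j hj ↦ Prod.Lex.monotone_fst _ _ (h j hj)⟩⟩

end Scarf

section Compact

open Filter

variable {K ι α : Type*} [Finite ι] [LinearOrder α]

theorem exists_mem_forall_exists_le_of_finset [Nonempty K] (w : ι → K → α) {G : ι → Set K}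
    (hG : ⋃ i, G i = Set.univ) (F : Finset K) :
    ∃ (C : Set ι) (x : ι → K), (∀ i ∈ C, x i ∈ G i) ∧
      ∀ y ∈ F, ∃ i ∈ C, ∀ j ∈ C, w i y ≤ w i (x j) := by
  classical
  obtain ⟨k⟩ := ‹Nonempty K›
  choose c hc using fun z ↦ Set.iUnion_eq_univ_iff.1 hG z
  have : Nonempty ↥(insert k F) := ⟨⟨k, F.mem_insert_self k⟩⟩
  obtain ⟨C, x, hcx, hx⟩ :=
    exists_label_eq_forall_exists_le (K := ↥(insert k F)) (fun i y ↦ w i y) (fun y ↦ c y)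
  refine ⟨C, fun i ↦ x i, fun i hi ↦ ?_, fun y hy ↦ hx ⟨y, Finset.mem_insert_of_mem hy⟩⟩
  convert hc (x i)
  exact (hcx i hi).symm

theorem isClosed_setOf_exists_forall_le [TopologicalSpace K] [TopologicalSpace α]
    [OrderClosedTopology α] {w : ι → K → α} (hw : ∀ i, Continuous (w i)) (C : Set ι) (y : K) :
    IsClosed {x : ι → K | ∃ i ∈ C, ∀ j ∈ C, w i y ≤ w i (x j)} := by
  have : {x : ι → K | ∃ i ∈ C, ∀ j ∈ C, w i y ≤ w i (x j)} =
      ⋃ i ∈ C, ⋂ j ∈ C, {x | w i y ≤ w i (x j)} := by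
    ext x
    simp
  rw [this]
  exact C.toFinite.isClosed_biUnion fun i _ ↦ isClosed_biInter fun j _ ↦
    isClosed_le continuous_const ((hw i).comp (continuous_apply j))

theorem exists_mem_forall_exists_le [Nonempty K] [TopologicalSpace K] [CompactSpace K]
    [TopologicalSpace α] [OrderClosedTopology α] {w : ι → K → α} (hw : ∀ i, Continuous (w i))
    {G : ι → Set K} (hGc : ∀ i, IsClosed (G i)) (hG : ⋃ i, G i = Set.univ) :
    ∃ (C : Set ι) (x : ι → K), (∀ i ∈ C, x i ∈ G i) ∧
      ∀ y, ∃ i ∈ C, ∀ j ∈ C, w i y ≤ w i (x j) := by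
  choose C x hxG hx using exists_mem_forall_exists_le_of_finset w hG
  let U : Ultrafilter (Finset K) := .of atTop
  obtain ⟨C₀, hC₀⟩ := (U.map C).eq_pure_of_finite
  have hC : ∀ᶠ F in (U : Filter (Finset K)), C F = C₀ := by
    have : {C₀} ∈ U.map C := hC₀ ▸ Ultrafilter.mem_pure.2 rfl
    exact this
  obtain ⟨x₀, -, hx₀⟩ := isCompact_univ.ultrafilter_le_nhds (U.map x) (by simp)
  replace hx₀ : Tendsto x U (nhds x₀) := hx₀
  refine ⟨C₀, x₀, fun i hi ↦ ?_, fun y ↦ ?_⟩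
  · refine (hGc i).mem_of_tendsto (tendsto_pi_nhds.1 hx₀ i) (hC.mono fun F hF ↦ ?_)
    exact hxG F i (hF ▸ hi)
  · have hy : ∀ᶠ F : Finset K in (U : Filter (Finset K)), y ∈ F :=
      Eventually.filter_mono (Ultrafilter.of_le atTop) <|
        (eventually_ge_atTop {y}).mono fun _ ↦ Finset.singleton_subset_iff.1
    refine (isClosed_setOf_exists_forall_le hw C₀ y).mem_of_tendsto hx₀ ?_
    filter_upwards [hC, hy] with F hF hyF using hF ▸ hx F y hyF

end Compact

section Simplex

variable {ι : Type*} [Fintype ι] [Nonempty ι]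

theorem exists_stdSimplex_forall_lt {m : ι → ℝ} (hm : ∀ i, 0 ≤ m i) (hsum : ∑ i, m i < 1) :
    ∃ y : stdSimplex ℝ ι, ∀ i, m i < y i := by
  have hpos : 0 < (1 - ∑ i, m i) / Fintype.card ι :=
    div_pos (sub_pos.2 hsum) (Nat.cast_pos.2 Fintype.card_pos)
  refine ⟨⟨fun i ↦ m i + (1 - ∑ j, m j) / Fintype.card ι, fun i ↦ add_nonneg (hm i) hpos.le, ?_⟩,
    fun i ↦ lt_add_of_pos_right _ hpos⟩
  have hcard : (Fintype.card ι : ℝ) ≠ 0 := Nat.cast_ne_zero.2 Fintype.card_ne_zero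
  rw [Finset.sum_add_distrib, Finset.sum_const, Finset.card_univ, nsmul_eq_mul,
    mul_div_cancel₀ _ hcard, add_sub_cancel]

theorem exists_forall_eq_of_forall_exists_le {C : Set ι} {x : ι → stdSimplex ℝ ι}
    (hx : ∀ y : stdSimplex ℝ ι, ∃ i ∈ C, ∀ j ∈ C, y i ≤ x j i) :
    ∃ z, (∀ j ∈ C, x j = z) ∧ ∀ i ∉ C, z i = 0 := by
  obtain ⟨j₀, hj₀, -⟩ := hx (Classical.arbitrary _)
  -- Points of the simplex exceeding the coordinatewise minimum `m` everywhere are ruled out, so `m`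
  -- has total mass one, like each `x j` above it.
  choose k hkC hk using fun i ↦ Set.exists_min_image C (x · i) C.toFinite ⟨j₀, hj₀⟩
  let m : ι → ℝ := C.indicator fun i ↦ x (k i) i
  have hm_nonneg : ∀ i, 0 ≤ m i := Set.indicator_nonneg fun i _ ↦ stdSimplex.zero_le _ i
  have hm_le : ∀ j ∈ C, ∀ i, m i ≤ x j i := fun j hj i ↦
    Set.indicator_apply_le' (fun _ ↦ hk i j hj) fun _ ↦ stdSimplex.zero_le _ i
  have hm_sum : 1 ≤ ∑ i, m i := by
    by_contra! hlt
    obtain ⟨y, hy⟩ := exists_stdSimplex_forall_lt hm_nonneg hlt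
    obtain ⟨i, hi, hyi⟩ := hx y
    refine (hyi (k i) (hkC i)).not_gt ?_
    simpa [m, hi] using hy i
  have hm_eq : ∀ j ∈ C, ∀ i, m i = x j i := by
    intro j hj i
    have hsum : ∑ i, m i = ∑ i, x j i :=
      (Finset.sum_le_sum fun i _ ↦ hm_le j hj i).antisymm <|
        (stdSimplex.sum_eq_one _).trans_le hm_sum
    exact (Finset.sum_eq_sum_iff_of_le fun i _ ↦ hm_le j hj i).1 hsum i (Finset.mem_univ i)
  refine ⟨x j₀, fun j hj ↦ ?_, fun i hi ↦ ?_⟩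
  · ext i
    exact (hm_eq j hj i).symm.trans (hm_eq j₀ hj₀ i)
  · rw [← hm_eq j₀ hj₀ i]
    exact Set.indicator_of_notMem hi _

theorem exists_forall_ne_zero_mem_of_iUnion_eq_univ {G : ι → Set (stdSimplex ℝ ι)}
    (hGc : ∀ i, IsClosed (G i)) (hG : ⋃ i, G i = Set.univ) :
    ∃ z : stdSimplex ℝ ι, ∀ i, z i ≠ 0 → z ∈ G i := by
  obtain ⟨C, x, hxG, hx⟩ := exists_mem_forall_exists_le
    (fun i ↦ (continuous_apply i).comp continuous_subtype_val) hGc hG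
  obtain ⟨z, hxz, hz⟩ := exists_forall_eq_of_forall_exists_le hx
  refine ⟨z, fun i hi ↦ ?_⟩
  have hiC : i ∈ C := by_contra fun h ↦ hi (hz i h)
  exact hxz i hiC ▸ hxG i hiC

theorem exists_forall_le_sum_mul {g : stdSimplex ℝ ι → ι → ℝ} (hg : ∀ i, Continuous (g · i)) :
    ∃ z : stdSimplex ℝ ι, ∀ j, g z j ≤ ∑ i, z i * g z i := by
  let G : ι → Set (stdSimplex ℝ ι) := fun i ↦ {z | ∀ j, g z j ≤ g z i}
  have hGc : ∀ i, IsClosed (G i) := fun i ↦ by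
    simp only [G, Set.ofPred_forall]
    exact isClosed_iInter fun j ↦ isClosed_le (hg j) (hg i)
  have hG : ⋃ i, G i = Set.univ := Set.iUnion_eq_univ_iff.2 fun z ↦ Finite.exists_max (g z)
  obtain ⟨z, hz⟩ := exists_forall_ne_zero_mem_of_iUnion_eq_univ hGc hG
  refine ⟨z, fun j ↦ ?_⟩
  calc g z j = ∑ i, z i * g z j := by rw [← Finset.sum_mul, stdSimplex.sum_eq_one, one_mul]
    _ ≤ ∑ i, z i * g z i := Finset.sum_le_sum fun i _ ↦ ?_
  obtain hi | hi := eq_or_ne (z i) 0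
  · simp [hi]
  · exact mul_le_mul_of_nonneg_left (hz i hi j) (stdSimplex.zero_le z i)

end Simplex

theorem exists_forall_le_of_finset {K Λ : Type*} [TopologicalSpace K] [CompactSpace K] [Nonempty K]
    {φ : K → Λ → ℝ} {ψ : K → ℝ} (hφ : ∀ y, Continuous (φ · y)) (hψ : Continuous ψ)
    (h : ∀ Y : Finset Λ, ∃ γ : stdSimplex ℝ Y → K, Continuous γ ∧
      ∀ z, ∑ y : Y, z y * φ (γ z) y ≤ ψ (γ z)) :
    ∃ a, ∀ y, φ a y ≤ ψ a := by
  have hfinite : ∀ Y : Finset Λ, (⋂ y ∈ Y, {a | φ a y ≤ ψ a}).Nonempty := by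
    intro Y
    obtain rfl | hY := Y.eq_empty_or_nonempty
    · simp
    have := hY.to_subtype
    obtain ⟨γ, hγ, hle⟩ := h Y
    obtain ⟨z, hz⟩ := exists_forall_le_sum_mul fun y : Y ↦ (hφ y).comp hγ
    exact ⟨γ z, Set.mem_iInter₂.2 fun y hy ↦ (hz ⟨y, hy⟩).trans (hle z)⟩
  obtain ⟨a, ha⟩ := CompactSpace.iInter_nonempty (fun y ↦ isClosed_le (hφ y) hψ) hfinite
  exact ⟨a, fun y ↦ Set.mem_iInter.1 ha y⟩

section Mixture

variable {ι E : Type*} [Fintype ι] [MeasurableSpace E]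

/-- The mixed strategy that plays `y i` with probability `z i`. -/
noncomputable def mixture (y : ι → E) (z : stdSimplex ℝ ι) : ProbabilityMeasure E :=
  ⟨∑ i, ENNReal.ofReal (z i) • Measure.dirac (y i), ⟨by
    simp only [Measure.coe_finsetSum, Finset.sum_apply, Measure.smul_apply, measure_univ,
      smul_eq_mul, mul_one]
    rw [← ENNReal.ofReal_sum_of_nonneg fun i _ ↦ stdSimplex.zero_le z i, stdSimplex.sum_eq_one,
      ENNReal.ofReal_one]⟩⟩

theorem integral_mixture [MeasurableSingletonClass E] (y : ι → E) (z : stdSimplex ℝ ι) (f : E → ℝ) :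
    ∫ s, f s ∂(mixture y z : Measure E) = ∑ i, z i * f (y i) := by
  have hf : ∀ i, Integrable f (Measure.dirac (y i)) := fun i ↦ integrable_dirac (by simp)
  rw [mixture, ProbabilityMeasure.coe_mk,
    integral_finsetSum_measure fun i _ ↦ (hf i).smul_measure ENNReal.ofReal_ne_top]
  simp [integral_smul_measure, ENNReal.toReal_ofReal, stdSimplex.zero_le]

theorem continuous_mixture [TopologicalSpace E] [T1Space E] [BorelSpace E] (y : ι → E) :
    Continuous (mixture y) := by
  rw [ProbabilityMeasure.continuous_iff_forall_continuous_integral]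
  intro f
  simp only [integral_mixture]
  exact continuous_finsetSum _ fun i _ ↦
    ((continuous_apply i).comp continuous_subtype_val).mul continuous_const

end Mixture

theorem le_integral_of_forall_sum_le {P : Type*} [Fintype P] {S : P → Type*}
    [∀ p, MeasurableSpace (S p)] {σ : ∀ p, Measure (S p)} [∀ p, IsProbabilityMeasure (σ p)]
    {h : ∀ p, S p → ℝ} (hint : ∀ p, Integrable (h p) (σ p))
    (hle : ∀ y : ∀ p, S p, ∑ p, h p (y p) ≤ ∑ p, ∫ s, h p s ∂σ p) (p : P) (s : S p) :
    h p s ≤ ∫ t, h p t ∂σ p := by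
  classical
  choose y hy using fun q ↦ exists_integral_le (hint q)
  by_contra! hlt
  refine (hle (Function.update y p s)).not_gt (Finset.sum_lt_sum (fun q _ ↦ ?_)
    ⟨p, Finset.mem_univ p, by simpa using hlt⟩)
  obtain rfl | hq := eq_or_ne q p
  · simpa using hlt.le
  · simpa [hq] using hy q

section Deviation

variable {P : Type*} [Fintype P] [DecidableEq P] {S : P → Type*} [∀ q, MeasurableSpace (S q)]

/-- The expected value of the payoff `f` when player `p` plays the pure strategy `s` and the others
follow the mixed strategies `σ`. The pure strategy overwrites the `p`-th coordinate of a profile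
drawn from `σ`, so that the measure does not depend on `p` and `s`. -/
noncomputable def deviationPayoff (f : (∀ q, S q) → ℝ) (σ : ∀ q, Measure (S q)) (p : P) (s : S p) :
    ℝ :=
  ∫ x, f (Function.update x p s) ∂Measure.pi σ

variable {f : (∀ q, S q) → ℝ} (σ : ∀ q, Measure (S q)) (p : P) (μ : Measure (S p))

theorem pi_update_eq_map [∀ q, SigmaFinite (σ q)] [IsProbabilityMeasure (σ p)] [SigmaFinite μ] :
    Measure.pi (Function.update σ p μ) =
      ((Measure.pi σ).prod μ).map fun x ↦ Function.update x.1 p x.2 := by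
  have : ∀ q, SigmaFinite (Function.update σ p μ q) :=
    (Function.forall_update_iff σ fun _ ν ↦ SigmaFinite ν).2 ⟨‹_›, fun q _ ↦ inferInstance⟩
  refine Measure.pi_eq fun t ht ↦ ?_
  have hpre : (fun x : (∀ q, S q) × S p ↦ Function.update x.1 p x.2) ⁻¹' Set.univ.pi t =
      Set.univ.pi (Function.update t p Set.univ) ×ˢ t p := by
    ext x
    simp only [Set.mem_preimage, Set.mem_prod, Set.mem_univ_pi]
    rw [Function.forall_update_iff x.1 fun q a ↦ a ∈ t q,
      Function.forall_update_iff t fun q A ↦ x.1 q ∈ A]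
    simp [and_comm]
  have hprod : ∏ q ∈ Finset.univ.erase p, σ q (Function.update t p Set.univ q) =
      ∏ q ∈ Finset.univ.erase p, Function.update σ p μ q (t q) :=
    Finset.prod_congr rfl fun q hq ↦ by simp [Finset.ne_of_mem_erase hq]
  rw [Measure.map_apply measurable_update' (.univ_pi ht), hpre, Measure.prod_prod, Measure.pi_pi,
    ← Finset.mul_prod_erase _ _ (Finset.mem_univ p),
    ← Finset.mul_prod_erase _ (fun q ↦ Function.update σ p μ q (t q)) (Finset.mem_univ p), hprod]
  simp [mul_comm]

variable {μ}

theorem integral_pi_update [∀ q, SigmaFinite (σ q)] [IsProbabilityMeasure (σ p)] [SigmaFinite μ]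
    (hf : Integrable f (Measure.pi (Function.update σ p μ))) :
    ∫ x, f x ∂Measure.pi (Function.update σ p μ) = ∫ s, deviationPayoff f σ p s ∂μ := by
  rw [pi_update_eq_map] at hf ⊢
  rw [integral_map measurable_update'.aemeasurable hf.1, integral_prod_symm]
  · rfl
  · exact hf.comp_measurable measurable_update'

theorem integrable_deviationPayoff [∀ q, SigmaFinite (σ q)] [IsProbabilityMeasure (σ p)]
    [SigmaFinite μ] (hf : Integrable f (Measure.pi (Function.update σ p μ))) :
    Integrable (deviationPayoff f σ p) μ := by
  rw [pi_update_eq_map] at hf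
  exact (hf.comp_measurable measurable_update').integral_prod_right

theorem integral_pi_update_dirac [∀ q, SigmaFinite (σ q)] [IsProbabilityMeasure (σ p)]
    [MeasurableSingletonClass (S p)] {s : S p}
    (hf : Integrable f (Measure.pi (Function.update σ p (Measure.dirac s)))) :
    ∫ x, f x ∂Measure.pi (Function.update σ p (Measure.dirac s)) = deviationPayoff f σ p s := by
  rw [integral_pi_update σ p hf, integral_dirac]

theorem integral_deviationPayoff [∀ q, SigmaFinite (σ q)] [IsProbabilityMeasure (σ p)]
    (hf : Integrable f (Measure.pi σ)) :
    ∫ s, deviationPayoff f σ p s ∂σ p = ∫ x, f x ∂Measure.pi σ := by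
  rw [← integral_pi_update σ p (by rwa [Function.update_eq_self]), Function.update_eq_self]

theorem sum_mul_deviationPayoff_mixture {ι : Type*} [Fintype ι]
    [MeasurableSingletonClass (S p)] (z : stdSimplex ℝ ι) (y : ι → ∀ q, S q)
    (hf : Integrable f (Measure.pi fun q ↦ (mixture (y · q) z : Measure (S q)))) :
    ∑ i, z i * deviationPayoff f (fun q ↦ mixture (y · q) z) p (y i p) =
      ∫ x, f x ∂Measure.pi fun q ↦ (mixture (y · q) z : Measure (S q)) := by
  rw [← integral_mixture, integral_deviationPayoff _ p hf]

theorem deviationPayoff_le_of_forall_sum_le {u : P → (∀ q, S q) → ℝ}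
    [∀ q, IsProbabilityMeasure (σ q)] (hu : ∀ p, Integrable (u p) (Measure.pi σ))
    (hle : ∀ y : ∀ q, S q,
      ∑ p, deviationPayoff (u p) σ p (y p) ≤ ∑ p, ∫ x, u p x ∂Measure.pi σ) (s : S p) :
    deviationPayoff (u p) σ p s ≤ ∫ x, u p x ∂Measure.pi σ := by
  rw [← integral_deviationPayoff σ p (hu p)]
  refine le_integral_of_forall_sum_le (h := fun q ↦ deviationPayoff (u q) σ q)
    (fun q ↦ ?_) (fun y ↦ ?_) p s
  · refine integrable_deviationPayoff σ q ?_
    rw [Function.update_eq_self]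
    exact hu q
  · simpa only [integral_deviationPayoff σ _ (hu _)] using hle y

end Deviation

section Game

variable {P : Type*} [Fintype P] {S : P → Type*} [∀ q, TopologicalSpace (S q)]
  [∀ q, CompactSpace (S q)] [∀ q, T2Space (S q)] [∀ q, SecondCountableTopology (S q)]
  [∀ q, MeasurableSpace (S q)] [∀ q, BorelSpace (S q)]

theorem integrable_pi_of_continuous {f : (∀ q, S q) → ℝ} (hf : Continuous f)
    (σ : ∀ q, Measure (S q)) [∀ q, IsProbabilityMeasure (σ q)] : Integrable f (Measure.pi σ) :=
  hf.integrable_of_hasCompactSupport (.of_compactSpace f)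

theorem continuous_integral_pi {f : (∀ q, S q) → ℝ} (hf : Continuous f) :
    Continuous fun σ : ∀ q, ProbabilityMeasure (S q) ↦
      ∫ x, f x ∂Measure.pi fun q ↦ (σ q : Measure (S q)) :=
  (ProbabilityMeasure.continuous_integral_continuousMap (⟨f, hf⟩ : C(_, ℝ))).comp
    ProbabilityMeasure.continuous_pi

variable [DecidableEq P]

theorem continuous_deviationPayoff {f : (∀ q, S q) → ℝ} (hf : Continuous f) (p : P) (s : S p) :
    Continuous fun σ : ∀ q, ProbabilityMeasure (S q) ↦ deviationPayoff f (fun q ↦ σ q) p s :=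
  continuous_integral_pi (hf.comp (continuous_id.update p continuous_const))

theorem exists_forall_sum_deviationPayoff_le [∀ q, Nonempty (S q)] {u : P → (∀ q, S q) → ℝ}
    (hu : ∀ p, Continuous (u p)) :
    ∃ σ : ∀ q, ProbabilityMeasure (S q), ∀ y : ∀ q, S q,
      ∑ p, deviationPayoff (u p) (fun q ↦ σ q) p (y p) ≤
        ∑ p, ∫ x, u p x ∂Measure.pi fun q ↦ (σ q : Measure (S q)) := by
  have : ∀ q, Nonempty (ProbabilityMeasure (S q)) := fun q ↦
    ⟨diracProba (Classical.arbitrary (S q))⟩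
  refine exists_forall_le_of_finset
    (fun y ↦ continuous_finsetSum _ fun p _ ↦ continuous_deviationPayoff (hu p) p (y p))
    (continuous_finsetSum _ fun p _ ↦ continuous_integral_pi (hu p)) fun Y ↦
    ⟨fun z q ↦ mixture (fun y : Y ↦ y.1 q) z, continuous_pi fun q ↦ continuous_mixture _,
      fun z ↦ le_of_eq ?_⟩
  simp only [Finset.mul_sum]
  rw [Finset.sum_comm]
  exact Finset.sum_congr rfl fun p _ ↦
    sum_mul_deviationPayoff_mixture p z _ (integrable_pi_of_continuous (hu p) _)

end Game

/-- **Existence of mixed strategy Nash equilibrium for continuous games.**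
Every continuous game (finitely many players, each with a nonempty compact metric
pure-strategy space and a continuous payoff function) possesses a mixed strategy
Nash equilibrium: a profile of Borel probability measures `σ` such that for every
player `p` and pure strategy `s : S p`, the expected payoff of deviating to the
Dirac measure at `s` does not exceed the expected payoff at `σ`. -/
theorem continuous_game_exists_mixed_nash_equilibrium
    (P : Type*) [Fintype P] [Nonempty P] [DecidableEq P]
    (S : P → Type*) [∀ p, MetricSpace (S p)] [∀ p, CompactSpace (S p)]
    [∀ p, Nonempty (S p)] [∀ p, MeasurableSpace (S p)] [∀ p, BorelSpace (S p)]
    (u : P → (∀ q, S q) → ℝ) (hu : ∀ p, Continuous (u p)) :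
    ∃ σ : ∀ p, Measure (S p),
      (∀ p, IsProbabilityMeasure (σ p)) ∧
      ∀ (p : P) (s : S p),
        (∫ x, u p x ∂(Measure.pi (Function.update σ p (Measure.dirac s)))) ≤
          ∫ x, u p x ∂(Measure.pi σ) := by
  obtain ⟨σ, hσ⟩ := exists_forall_sum_deviationPayoff_le hu
  refine ⟨fun q ↦ σ q, fun q ↦ inferInstance, fun p s ↦ ?_⟩
  have : ∀ q, IsProbabilityMeasure
      (Function.update (fun q ↦ (σ q : Measure (S q))) p (Measure.dirac s) q) :=
    (Function.forall_update_iff _ fun _ ν ↦ IsProbabilityMeasure ν).2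
      ⟨inferInstance, fun q _ ↦ inferInstance⟩
  rw [integral_pi_update_dirac _ p (integrable_pi_of_continuous (hu p) _)]
  exact deviationPayoff_le_of_forall_sum_le _ p
    (fun q ↦ integrable_pi_of_continuous (hu q) _) hσ s
end

section
/- Let ⟨P, (S_p), (u_p)⟩ be a continuous game. Suppose (σ^k)_{k∈ℕ} is a sequence of mixed strategy profiles such that for each player p the measures σ^k_p converge weakly to σ_p as k → ∞, (ε^k)_{k∈ℕ} is a sequence of nonnegative reals converging to ε, and for each k the profile σ^k is an ε^k-equilibrium. Then the limit profile σ = (σ_p) is an ε-equilibrium. -/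
open MeasureTheory Filter Topology

/-!
In the topology of weak convergence, the product measure depends continuously on its factors, and
`σ ↦ (δ_s, σ_{-p})` changes a single factor to a constant. Both sides of each defining inequality
of an ε-equilibrium are therefore continuous in `(ε, σ)`, so the pairs for which `σ` is an
ε-equilibrium form a closed set.
-/

open scoped BoundedContinuousFunction

section EpsEquilibrium

variable {P : Type*} [Fintype P] {S : P → Type*} [∀ p, TopologicalSpace (S p)]
  [∀ p, MeasurableSpace (S p)] (u : P → (∀ q, S q) →ᵇ ℝ)

/-- The expected payoff of player `p` under the mixed strategy profile `σ`. Payoff functions are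
bundled as bounded continuous functions, which stay integrable on noncompact strategy spaces. -/
noncomputable def expectedPayoff (σ : ∀ q, ProbabilityMeasure (S q)) (p : P) : ℝ :=
  ∫ x, u p x ∂(ProbabilityMeasure.pi σ : Measure (∀ q, S q))

/-- The ε-equilibria of the game with payoffs `u`: mixed strategy profiles in which no player gains
more than `ε` by deviating to a pure strategy. -/
def IsEpsEquilibrium [DecidableEq P] (ε : ℝ) (σ : ∀ q, ProbabilityMeasure (S q)) : Prop :=
  ∀ (p : P) (s : S p),
    expectedPayoff u (Function.update σ p (diracProba s)) p ≤ expectedPayoff u σ p + ε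

theorem expectedPayoff_update_diracProba [DecidableEq P]
    (σ : ∀ q, ProbabilityMeasure (S q)) (p : P) (s : S p) :
    expectedPayoff u (Function.update σ p (diracProba s)) p =
      ∫ x, u p x ∂(Measure.pi
        (Function.update (fun q ↦ (σ q : Measure (S q))) p (Measure.dirac s))) := by
  have coe_update :
      (fun q ↦ (Function.update σ p (diracProba s) q : Measure (S q))) =
        Function.update (fun q ↦ (σ q : Measure (S q))) p (Measure.dirac s) :=
    funext <|
      Function.apply_update (fun q (μ : ProbabilityMeasure (S q)) ↦ (μ : Measure (S q)))
        σ p (diracProba s)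
  rw [expectedPayoff, ProbabilityMeasure.toMeasure_pi, coe_update]

variable {u} in
theorem isEpsEquilibrium_iff_integral_le [DecidableEq P] {ε : ℝ}
    {σ : ∀ q, ProbabilityMeasure (S q)} :
    IsEpsEquilibrium u ε σ ↔ ∀ (p : P) (s : S p),
      (∫ x, u p x ∂(Measure.pi
        (Function.update (fun q ↦ (σ q : Measure (S q))) p (Measure.dirac s)))) ≤
        (∫ x, u p x ∂(Measure.pi fun q ↦ (σ q : Measure (S q)))) + ε := by
  simp only [IsEpsEquilibrium, expectedPayoff_update_diracProba]
  exact Iff.rfl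

variable [∀ p, SecondCountableTopology (S p)] [∀ p, TopologicalSpace.PseudoMetrizableSpace (S p)]
  [∀ p, OpensMeasurableSpace (S p)]

theorem continuous_expectedPayoff (p : P) :
    Continuous fun σ : ∀ q, ProbabilityMeasure (S q) ↦ expectedPayoff u σ p :=
  (ProbabilityMeasure.continuous_integral_boundedContinuousFunction (u p)).comp
    ProbabilityMeasure.continuous_pi

variable [DecidableEq P]

theorem isClosed_setOf_isEpsEquilibrium :
    IsClosed {x : ℝ × (∀ q, ProbabilityMeasure (S q)) | IsEpsEquilibrium u x.1 x.2} := by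
  simp only [IsEpsEquilibrium, Set.ofPred_forall]
  refine isClosed_iInter fun p ↦ isClosed_iInter fun s ↦ isClosed_le ?_ ?_
  · exact (continuous_expectedPayoff u p).comp (continuous_snd.update p continuous_const)
  · exact ((continuous_expectedPayoff u p).comp continuous_snd).add continuous_fst

variable {u} in
theorem limit_of_eps_equilibria_is_eps_equilibrium_general {ι : Type*} {l : Filter ι} [NeBot l]
    {σseq : ι → ∀ p, ProbabilityMeasure (S p)} {σ : ∀ p, ProbabilityMeasure (S p)}
    (hσ : ∀ p, Tendsto (fun k ↦ σseq k p) l (𝓝 (σ p)))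
    {εseq : ι → ℝ} {ε : ℝ} (hε : Tendsto εseq l (𝓝 ε))
    (heq : ∀ᶠ k in l, IsEpsEquilibrium u (εseq k) (σseq k)) :
    IsEpsEquilibrium u ε σ :=
  (isClosed_setOf_isEpsEquilibrium u).mem_of_tendsto
    (hε.prodMk_nhds (tendsto_pi_nhds.2 hσ)) heq

end EpsEquilibrium

/-- **Limits of ε-equilibria in continuous games.**
If `σseq k` is a sequence of mixed strategy profiles of a continuous game converging
weakly (playerwise) to a profile `σ`, `εseq k` are nonnegative reals converging to `ε`,
and each `σseq k` is an `εseq k`-equilibrium, then `σ` is an `ε`-equilibrium. -/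
theorem limit_of_eps_equilibria_is_eps_equilibrium
    (P : Type*) [Fintype P] [Nonempty P] [DecidableEq P]
    (S : P → Type*) [∀ p, MetricSpace (S p)] [∀ p, CompactSpace (S p)]
    [∀ p, Nonempty (S p)] [∀ p, MeasurableSpace (S p)] [∀ p, BorelSpace (S p)]
    (u : P → (∀ q, S q) → ℝ) (hu : ∀ p, Continuous (u p))
    (σseq : ℕ → ∀ p, Measure (S p)) (hσseq : ∀ k p, IsProbabilityMeasure (σseq k p))
    (σ : ∀ p, Measure (S p)) (hσ : ∀ p, IsProbabilityMeasure (σ p))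
    (hweak : ∀ (p : P) (f : BoundedContinuousFunction (S p) ℝ),
      Tendsto (fun k => ∫ x, f x ∂(σseq k p)) atTop (𝓝 (∫ x, f x ∂(σ p))))
    (ε : ℝ) (εseq : ℕ → ℝ) (hεnonneg : ∀ k, 0 ≤ εseq k)
    (hεlim : Tendsto εseq atTop (𝓝 ε))
    (heq : ∀ (k : ℕ) (p : P) (s : S p),
      (∫ x, u p x ∂(Measure.pi (Function.update (σseq k) p (Measure.dirac s)))) ≤
        (∫ x, u p x ∂(Measure.pi (σseq k))) + εseq k) :
    ∀ (p : P) (s : S p),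
      (∫ x, u p x ∂(Measure.pi (Function.update σ p (Measure.dirac s)))) ≤
        (∫ x, u p x ∂(Measure.pi σ)) + ε := by
  let v : P → (∀ q, S q) →ᵇ ℝ := fun p ↦ .mkOfCompact ⟨u p, hu p⟩
  let τseq : ℕ → ∀ p, ProbabilityMeasure (S p) := fun k p ↦ ⟨σseq k p, hσseq k p⟩
  let τ : ∀ p, ProbabilityMeasure (S p) := fun p ↦ ⟨σ p, hσ p⟩
  have hτ (p : P) : Tendsto (fun k ↦ τseq k p) atTop (𝓝 (τ p)) :=
    ProbabilityMeasure.tendsto_iff_forall_integral_tendsto.2 (hweak p)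
  have hτseq (k : ℕ) : IsEpsEquilibrium v (εseq k) (τseq k) :=
    isEpsEquilibrium_iff_integral_le.2 (heq k)
  exact isEpsEquilibrium_iff_integral_le.1 <|
    limit_of_eps_equilibria_is_eps_equilibrium_general hτ hεlim (.of_forall hτseq)
end

section
/- Let ⟨P, (S_p), (u_p)⟩ be a continuous game and φ > 0. Then for each player p there exist a finite partition of S_p into nonempty sets U_p^1, …, U_p^{m_p} and representative points s_p^j ∈ U_p^j, such that the functions ũ_p : ∏_{q∈P} S_q → ℝ defined by ũ_p(s) = u_p((s_q^{j_q})_{q∈P}) whenever s ∈ ∏_q U_q^{j_q} satisfy |u_p(s) − ũ_p(s)| ≤ φ for every player p and every s ∈ ∏_q S_q. In other words, every continuous game admits an 'essentially finite' φ-approximation whose payoffs are constant on each product cell of finite partitions of the strategy spaces. -/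
/-! The payoffs are uniformly continuous on the product of the strategy spaces, so they vary little
between two profiles whose coordinates are all close. It therefore suffices to cut every strategy
space into finitely many cells of small diameter. Such cells are the fibres of a map sending each
point to a nearby point of a finite net: as fibres they are disjoint, and the empty ones do not
occur since only points of the range are used as indices. -/

open Set
open scoped Uniformity

/-- The partition of the domain of a surjection into its fibres, which turns a map with finitely
many values into a finite partition. The representatives `some i` come from a chosen right inverse
of the surjection. -/
noncomputable def fiberPartition {α ι : Type*} (f : α → ι) (hf : f.Surjective) :
    IndexedPartition fun i => f ⁻¹' {i} where
  eq_of_mem hi hj := hi.symm.trans hj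
  some := Function.surjInv hf
  some_mem := Function.surjInv_eq hf
  index := f
  mem_index _ := rfl

theorem exists_indexedPartition_fin_of_finite_range {α β : Type*} (f : α → β)
    (hf : (range f).Finite) :
    ∃ (m : ℕ) (U : Fin m → Set α) (_ : IndexedPartition U),
      ∀ j, ∀ x ∈ U j, ∀ y ∈ U j, f x = f y := by
  have : Finite (range f) := hf
  obtain ⟨m, ⟨e⟩⟩ := Finite.exists_equiv_fin (range f)
  refine ⟨m, _, fiberPartition (e ∘ rangeFactorization f)
    (e.surjective.comp rangeFactorization_surjective), fun j x hx y hy => ?_⟩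
  exact congrArg Subtype.val (e.injective (hx.trans hy.symm))

theorem exists_indexedPartition_fin_prod_subset {α : Type*} [UniformSpace α]
    (hα : TotallyBounded (univ : Set α)) {V : SetRel α α} (hV : V ∈ 𝓤 α) :
    ∃ (m : ℕ) (U : Fin m → Set α) (_ : IndexedPartition U), ∀ j, U j ×ˢ U j ⊆ V := by
  obtain ⟨W, hW, hW_symm, hWV⟩ := comp_symm_mem_uniformity_sets hV
  obtain ⟨net, hnet, hcover⟩ := hα W hW
  have exists_near (x : α) : ∃ y ∈ net, (x, y) ∈ W := by simpa using hcover (mem_univ x)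
  choose near near_mem_net rel_near using exists_near
  obtain ⟨m, U, cells, near_eq⟩ := exists_indexedPartition_fin_of_finite_range near
    (hnet.subset (range_subset_iff.2 near_mem_net))
  refine ⟨m, U, cells, fun j => ?_⟩
  rintro ⟨x, y⟩ ⟨hx, hy⟩
  have near_x_rel_y : (near x, y) ∈ W := near_eq j x hx y hy ▸ hW_symm.symm _ _ (rel_near y)
  exact hWV ⟨near x, rel_near x, near_x_rel_y⟩

theorem exists_entourages_of_mem_uniformity_pi {ι : Type*} {α : ι → Type*}
    [∀ i, UniformSpace (α i)] {V : SetRel (∀ i, α i) (∀ i, α i)} (hV : V ∈ 𝓤 (∀ i, α i)) :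
    ∃ W : ∀ i, SetRel (α i) (α i), (∀ i, W i ∈ 𝓤 (α i)) ∧
      ∀ x y, (∀ i, (x i, y i) ∈ W i) → (x, y) ∈ V := by
  rw [Pi.uniformity, Filter.mem_iInf'] at hV
  obtain ⟨_, _, A, hA, _, _, rfl⟩ := hV
  choose W hW hWA using hA
  exact ⟨W, hW, fun x y h => mem_iInter.2 fun i => hWA i (h i)⟩

theorem continuous_game_has_essentially_finite_approximation_general
    {P ι E : Type*} {S : P → Type*} [∀ p, UniformSpace (S p)] [UniformSpace E]
    (hS : ∀ p, TotallyBounded (univ : Set (S p)))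
    (u : ι → (∀ q, S q) → E) (hu : UniformEquicontinuous u) {V : SetRel E E} (hV : V ∈ 𝓤 E) :
    ∃ (m : P → ℕ) (U : ∀ p, Fin (m p) → Set (S p)) (cells : ∀ p, IndexedPartition (U p)),
      ∀ (i : ι) (s : ∀ q, S q) (j : ∀ q, Fin (m q)), (∀ q, s q ∈ U q (j q)) →
        (u i s, u i fun q => (cells q).some (j q)) ∈ V := by
  obtain ⟨W, hW, close_of_close⟩ := exists_entourages_of_mem_uniformity_pi (hu V hV)
  choose m U cells small using fun p => exists_indexedPartition_fin_prod_subset (hS p) (hW p)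
  refine ⟨m, U, cells, fun i s j hs => close_of_close _ _ (fun q => ?_) i⟩
  exact small q (j q) ⟨hs q, (cells q).some_mem (j q)⟩

/-- **Every continuous game admits an "essentially finite" φ-approximation.**
For every continuous game and every `φ > 0`, each pure strategy space `S p` can be
partitioned into finitely many nonempty pieces `U p 0, …, U p (m p − 1)` with
representative points `rep p j ∈ U p j` such that the "essentially finite" payoffs
`ũ p s := u p (rep of the cell of s)`, i.e. the payoffs constant on each product
cell, approximate the original payoffs within `φ`:
`|u p s − u p (fun q => rep q (j q))| ≤ φ` whenever `s q ∈ U q (j q)` for all `q`. -/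
theorem continuous_game_has_essentially_finite_approximation
    (P : Type*) [Fintype P] [Nonempty P]
    (S : P → Type*) [∀ p, MetricSpace (S p)] [∀ p, CompactSpace (S p)]
    [∀ p, Nonempty (S p)]
    (u : P → (∀ q, S q) → ℝ) (hu : ∀ p, Continuous (u p))
    (φ : ℝ) (hφ : 0 < φ) :
    ∃ (m : P → ℕ) (U : ∀ p, Fin (m p) → Set (S p)) (rep : ∀ p, Fin (m p) → S p),
      (∀ p j, (U p j).Nonempty) ∧
      (∀ (p : P) (j j' : Fin (m p)), j ≠ j' → Disjoint (U p j) (U p j')) ∧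
      (∀ p, (⋃ j, U p j) = Set.univ) ∧
      (∀ p j, rep p j ∈ U p j) ∧
      (∀ (p : P) (s : ∀ q, S q) (j : ∀ q, Fin (m q)),
        (∀ q, s q ∈ U q (j q)) → |u p s - u p (fun q => rep q (j q))| ≤ φ) := by
  obtain ⟨m, U, cells, close⟩ := continuous_game_has_essentially_finite_approximation_general
    (fun p => (isCompact_univ (X := S p)).totallyBounded) u
    (uniformEquicontinuous_finite.2 fun p => CompactSpace.uniformContinuous_of_continuous (hu p))
    (Metric.uniformity_basis_dist_le.mem_of_mem hφ)
  exact ⟨m, U, fun p => (cells p).some, fun p j => ⟨_, (cells p).some_mem j⟩,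
    fun p _ _ hj => (cells p).disjoint hj, fun p => (cells p).iUnion,
    fun p => (cells p).some_mem, close⟩
end

section
/- Let P ∈ ℝ^{n×n} be a row-stochastic matrix that is reversible with respect to θ. Then there exists x ∈ ℝⁿ with x ≠ 0 and ⟨x, 𝟙⟩_θ = 0 such that ⟨Px, x⟩_θ ≥ −(θ₁/(1−θ₁)) ⟨x, x⟩_θ. Consequently the second largest eigenvalue λ₂ of P, characterized as the supremum of the Rayleigh quotient ⟨Px, x⟩_θ / ⟨x, x⟩_θ over nonzero x with ⟨x, 𝟙⟩_θ = 0, satisfies λ₂ ≥ −θ₁/(1−θ₁). -/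
open Matrix

/-!
Center the indicator of a state `k`: the vector `x = e_k - θ_k 𝟙` is orthogonal to `𝟙`, and
`⟨z, x⟩_θ = θ_k z_k` for every `z` orthogonal to `𝟙`. Stationarity of `θ` keeps `Px` orthogonal to
`𝟙`, so `⟨x, x⟩_θ = θ_k (1 - θ_k)` and `⟨Px, x⟩_θ = θ_k (P_kk - θ_k) ≥ -θ_k²`, whose ratio is at
least `-θ_k / (1 - θ_k)`. The Rayleigh quotients are bounded above by `1`, because the Dirichlet
form `⟨x, x⟩_θ - ⟨Px, x⟩_θ` equals `½ ∑ θ_i P_ij (x_i - x_j)²`.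
-/

section WeightedInner

variable {ι : Type*} [Fintype ι] {θ : ι → ℝ}

lemma wInner_eq_sum_mul (θ x y : ι → ℝ) : ⟪x, y⟫_[ℝ, θ] = ∑ i, x i * y i * θ i := by
  simp [RCLike.wInner, mul_comm]

lemma wInner_self_nonneg (hθ : ∀ i, 0 ≤ θ i) (x : ι → ℝ) : 0 ≤ ⟪x, x⟫_[ℝ, θ] := by
  rw [wInner_eq_sum_mul]
  exact Finset.sum_nonneg fun i _ => mul_nonneg (mul_self_nonneg _) (hθ i)

lemma wInner_self_pos (hθ : ∀ i, 0 < θ i) {x : ι → ℝ} (hx : x ≠ 0) : 0 < ⟪x, x⟫_[ℝ, θ] := by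
  obtain ⟨i, hi⟩ := Function.ne_iff.mp hx
  rw [wInner_eq_sum_mul]
  exact Finset.sum_pos' (fun j _ => mul_nonneg (mul_self_nonneg _) (hθ j).le)
    ⟨i, Finset.mem_univ i, mul_pos (mul_self_pos.mpr hi) (hθ i)⟩

end WeightedInner

section CenteredIndicator

variable {ι : Type*} [DecidableEq ι]

/-- The indicator of the state `k` minus its `θ`-mean `θ k`. For a probability vector `θ` it is the
orthogonal projection of the indicator onto the complement of the constants. -/
def centeredIndicator (θ : ι → ℝ) (k : ι) : ι → ℝ :=
  Pi.single k 1 - θ k • 1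

lemma centeredIndicator_apply_self (θ : ι → ℝ) (k : ι) : centeredIndicator θ k k = 1 - θ k := by
  simp [centeredIndicator]

lemma centeredIndicator_ne_zero {θ : ι → ℝ} {k : ι} (hk : θ k ≠ 1) : centeredIndicator θ k ≠ 0 := by
  intro h
  have hk_zero : 1 - θ k = 0 := by
    rw [← centeredIndicator_apply_self, h, Pi.zero_apply]
  exact hk (sub_eq_zero.mp hk_zero).symm

variable [Fintype ι]

lemma wInner_single_one (θ x : ι → ℝ) (k : ι) : ⟪x, Pi.single k 1⟫_[ℝ, θ] = θ k * x k := by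
  simp [wInner_eq_sum_mul, Pi.single_apply, mul_comm]

lemma wInner_centeredIndicator_one {θ : ι → ℝ} (hsum : ∑ i, θ i = 1) (k : ι) :
    ⟪centeredIndicator θ k, 1⟫_[ℝ, θ] = 0 := by
  simp [wInner_eq_sum_mul, centeredIndicator, sub_mul, Pi.single_apply, ← Finset.mul_sum, hsum]

lemma wInner_centeredIndicator {θ x : ι → ℝ} (hx : ⟪x, 1⟫_[ℝ, θ] = 0) (k : ι) :
    ⟪x, centeredIndicator θ k⟫_[ℝ, θ] = θ k * x k := by
  rw [centeredIndicator, RCLike.wInner_sub_right, RCLike.wInner_smul_right, hx, smul_zero, sub_zero,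
    wInner_single_one]

lemma wInner_centeredIndicator_self {θ : ι → ℝ} (hsum : ∑ i, θ i = 1) (k : ι) :
    ⟪centeredIndicator θ k, centeredIndicator θ k⟫_[ℝ, θ] = θ k * (1 - θ k) := by
  rw [wInner_centeredIndicator (wInner_centeredIndicator_one hsum k), centeredIndicator_apply_self]

end CenteredIndicator

section Stationary

variable {ι : Type*} [Fintype ι] {θ : ι → ℝ} {P : Matrix ι ι ℝ}

lemma vecMul_eq_self_of_reversible (hone : P *ᵥ 1 = 1)
    (hrev : ∀ i j, θ i * P i j = θ j * P j i) : θ ᵥ* P = θ := by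
  ext j
  calc (θ ᵥ* P) j = ∑ i, θ j * P j i := Finset.sum_congr rfl fun i _ => hrev i j
    _ = θ j * (P *ᵥ 1) j := by simp [mulVec, dotProduct, Finset.mul_sum]
    _ = θ j := by rw [hone, Pi.one_apply, mul_one]

lemma wInner_mulVec_one (hstat : θ ᵥ* P = θ) (x : ι → ℝ) :
    ⟪P *ᵥ x, 1⟫_[ℝ, θ] = ⟪x, 1⟫_[ℝ, θ] := by
  have wInner_one (y : ι → ℝ) : ⟪y, 1⟫_[ℝ, θ] = θ ⬝ᵥ y := by
    simp [wInner_eq_sum_mul, dotProduct, mul_comm]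
  rw [wInner_one, wInner_one, dotProduct_mulVec, hstat]

lemma sum_mul_sq_sub_eq_two_mul_wInner_sub (hone : P *ᵥ 1 = 1) (hstat : θ ᵥ* P = θ) (x : ι → ℝ) :
    ∑ i, ∑ j, θ i * P i j * (x i - x j) ^ 2 =
      2 * (⟪x, x⟫_[ℝ, θ] - ⟪P *ᵥ x, x⟫_[ℝ, θ]) := by
  have row_sum (i : ι) : ∑ j, P i j = 1 := by
    simpa [mulVec, dotProduct] using congrFun hone i
  have column_sum (j : ι) : ∑ i, θ i * P i j = θ j := congrFun hstat j
  have sum_source : ∑ i, ∑ j, θ i * P i j * (x i * x i) = ⟪x, x⟫_[ℝ, θ] := by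
    simp_rw [wInner_eq_sum_mul, ← Finset.sum_mul, ← Finset.mul_sum, row_sum, mul_one, mul_comm]
  have sum_target : ∑ i, ∑ j, θ i * P i j * (x j * x j) = ⟪x, x⟫_[ℝ, θ] := by
    rw [Finset.sum_comm]
    simp_rw [wInner_eq_sum_mul, ← Finset.sum_mul, column_sum, mul_comm]
  have sum_cross : ∑ i, ∑ j, θ i * P i j * (x i * x j) = ⟪P *ᵥ x, x⟫_[ℝ, θ] := by
    simp only [wInner_eq_sum_mul, mulVec, dotProduct, Finset.sum_mul]
    exact Finset.sum_congr rfl fun i _ => Finset.sum_congr rfl fun j _ => by ring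
  calc ∑ i, ∑ j, θ i * P i j * (x i - x j) ^ 2
      = ∑ i, ∑ j, θ i * P i j * (x i * x i) + ∑ i, ∑ j, θ i * P i j * (x j * x j)
          - 2 * ∑ i, ∑ j, θ i * P i j * (x i * x j) := by
        simp only [Finset.mul_sum, ← Finset.sum_add_distrib, ← Finset.sum_sub_distrib]
        exact Finset.sum_congr rfl fun i _ => Finset.sum_congr rfl fun j _ => by ring
    _ = 2 * (⟪x, x⟫_[ℝ, θ] - ⟪P *ᵥ x, x⟫_[ℝ, θ]) := by
        rw [sum_source, sum_target, sum_cross]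
        ring

variable [DecidableEq ι]

lemma wInner_mulVec_self_le (hθ : ∀ i, 0 ≤ θ i) (hP : P ∈ rowStochastic ℝ ι) (hstat : θ ᵥ* P = θ)
    (x : ι → ℝ) : ⟪P *ᵥ x, x⟫_[ℝ, θ] ≤ ⟪x, x⟫_[ℝ, θ] := by
  have dirichlet_nonneg : 0 ≤ ∑ i, ∑ j, θ i * P i j * (x i - x j) ^ 2 :=
    Finset.sum_nonneg fun i _ => Finset.sum_nonneg fun j _ =>
      mul_nonneg (mul_nonneg (hθ i) (nonneg_of_mem_rowStochastic hP)) (sq_nonneg _)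
  rw [sum_mul_sq_sub_eq_two_mul_wInner_sub (mem_rowStochastic.mp hP).2 hstat] at dirichlet_nonneg
  linarith

lemma wInner_mulVec_centeredIndicator_self (hsum : ∑ i, θ i = 1) (hone : P *ᵥ 1 = 1)
    (hstat : θ ᵥ* P = θ) (k : ι) :
    ⟪P *ᵥ centeredIndicator θ k, centeredIndicator θ k⟫_[ℝ, θ] = θ k * (P k k - θ k) := by
  have image_orthogonal : ⟪P *ᵥ centeredIndicator θ k, 1⟫_[ℝ, θ] = 0 := by
    rw [wInner_mulVec_one hstat, wInner_centeredIndicator_one hsum]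
  have image_apply : (P *ᵥ centeredIndicator θ k) k = P k k - θ k := by
    simp [centeredIndicator, mulVec_sub, mulVec_smul, hone]
  rw [wInner_centeredIndicator image_orthogonal, image_apply]

lemma neg_div_mul_wInner_centeredIndicator_le (hsum : ∑ i, θ i = 1) (hone : P *ᵥ 1 = 1)
    (hstat : θ ᵥ* P = θ) {k : ι} (hθ : 0 ≤ θ k) (hθ1 : θ k ≠ 1) (hP : 0 ≤ P k k) :
    -(θ k / (1 - θ k)) * ⟪centeredIndicator θ k, centeredIndicator θ k⟫_[ℝ, θ] ≤
      ⟪P *ᵥ centeredIndicator θ k, centeredIndicator θ k⟫_[ℝ, θ] := by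
  have one_sub_ne_zero : 1 - θ k ≠ 0 := sub_ne_zero.mpr hθ1.symm
  rw [wInner_centeredIndicator_self hsum, wInner_mulVec_centeredIndicator_self hsum hone hstat]
  calc -(θ k / (1 - θ k)) * (θ k * (1 - θ k)) = θ k * (0 - θ k) := by
        field_simp
        ring
    _ ≤ θ k * (P k k - θ k) := by gcongr

end Stationary

section RayleighQuotient

variable {ι : Type*} [Fintype ι] {θ : ι → ℝ} {P : Matrix ι ι ℝ}

/-- The Rayleigh quotients of `P` on the nonzero vectors that are `θ`-orthogonal to the constants.
When `P` is row-stochastic and reversible with respect to a positive `θ`, their supremum is the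
second largest eigenvalue of `P`. -/
def meanZeroRayleighQuotients (θ : ι → ℝ) (P : Matrix ι ι ℝ) : Set ℝ :=
  {r | ∃ x : ι → ℝ, x ≠ 0 ∧ ⟪x, 1⟫_[ℝ, θ] = 0 ∧ r = ⟪P *ᵥ x, x⟫_[ℝ, θ] / ⟪x, x⟫_[ℝ, θ]}

variable [DecidableEq ι]

lemma bddAbove_meanZeroRayleighQuotients (hθ : ∀ i, 0 ≤ θ i) (hP : P ∈ rowStochastic ℝ ι)
    (hstat : θ ᵥ* P = θ) : BddAbove (meanZeroRayleighQuotients θ P) := by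
  refine ⟨1, ?_⟩
  rintro r ⟨x, -, -, rfl⟩
  exact div_le_one_of_le₀ (wInner_mulVec_self_le hθ hP hstat x) (wInner_self_nonneg hθ x)

theorem reversible_second_eigenvalue_lower_bound_general [Nontrivial ι] (hθ : ∀ i, 0 < θ i)
    (hsum : ∑ i, θ i = 1) (hP : P ∈ rowStochastic ℝ ι) (hstat : θ ᵥ* P = θ) (k : ι) :
    (∃ x : ι → ℝ, x ≠ 0 ∧ ⟪x, 1⟫_[ℝ, θ] = 0 ∧
      -(θ k / (1 - θ k)) * ⟪x, x⟫_[ℝ, θ] ≤ ⟪P *ᵥ x, x⟫_[ℝ, θ]) ∧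
    -(θ k / (1 - θ k)) ≤ sSup (meanZeroRayleighQuotients θ P) := by
  obtain ⟨j, hjk⟩ := exists_ne k
  have hk_lt_one : θ k < 1 := hsum ▸ Finset.single_lt_sum hjk (Finset.mem_univ k)
    (Finset.mem_univ j) (hθ j) fun i _ _ => (hθ i).le
  have hne : centeredIndicator θ k ≠ 0 := centeredIndicator_ne_zero hk_lt_one.ne
  have horth : ⟪centeredIndicator θ k, 1⟫_[ℝ, θ] = 0 := wInner_centeredIndicator_one hsum k
  have hbound := neg_div_mul_wInner_centeredIndicator_le hsum (mem_rowStochastic.mp hP).2 hstat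
    (hθ k).le hk_lt_one.ne (nonneg_of_mem_rowStochastic hP)
  refine ⟨⟨centeredIndicator θ k, hne, horth, hbound⟩, ?_⟩
  calc -(θ k / (1 - θ k))
      ≤ ⟪P *ᵥ centeredIndicator θ k, centeredIndicator θ k⟫_[ℝ, θ] /
          ⟪centeredIndicator θ k, centeredIndicator θ k⟫_[ℝ, θ] :=
        (le_div_iff₀ (wInner_self_pos hθ hne)).mpr hbound
    _ ≤ sSup (meanZeroRayleighQuotients θ P) :=
        le_csSup (bddAbove_meanZeroRayleighQuotients (fun i => (hθ i).le) hP hstat)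
          ⟨_, hne, horth, rfl⟩

end RayleighQuotient

/-- **Lower bound for the second largest eigenvalue of a reversible stochastic matrix.**
Let `θ` be a probability vector on `n + 2 ≥ 2` states with `0 < θ 0` and nondecreasing
entries, and let `P` be row-stochastic and reversible w.r.t. `θ`. Then there exists a
nonzero `x` with `⟨x, 𝟙⟩_θ = 0` such that `⟨Px, x⟩_θ ≥ −(θ₁/(1−θ₁)) ⟨x, x⟩_θ`;
consequently the second largest eigenvalue
`λ₂ = sup { ⟨Px, x⟩_θ / ⟨x, x⟩_θ : x ≠ 0, ⟨x, 𝟙⟩_θ = 0 }`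
satisfies `λ₂ ≥ −θ₁/(1−θ₁)`. -/
theorem reversible_second_eigenvalue_lower_bound
    (n : ℕ) (θ : Fin (n + 2) → ℝ)
    (hθ1 : 0 < θ 0) (hmono : Monotone θ) (hsum : ∑ i, θ i = 1)
    (P : Matrix (Fin (n + 2)) (Fin (n + 2)) ℝ)
    (hnonneg : ∀ i j, 0 ≤ P i j) (hrow : ∀ i, ∑ j, P i j = 1)
    (hrev : ∀ i j, θ i * P i j = θ j * P j i) :
    (∃ x : Fin (n + 2) → ℝ, x ≠ 0 ∧ (∑ i, x i * θ i) = 0 ∧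
      -(θ 0 / (1 - θ 0)) * ∑ i, x i * x i * θ i ≤ ∑ i, P.mulVec x i * x i * θ i) ∧
    -(θ 0 / (1 - θ 0)) ≤
      sSup {r : ℝ | ∃ x : Fin (n + 2) → ℝ, x ≠ 0 ∧ (∑ i, x i * θ i) = 0 ∧
        r = (∑ i, P.mulVec x i * x i * θ i) / (∑ i, x i * x i * θ i)} := by
  have hθ : ∀ i, 0 < θ i := fun i => hθ1.trans_le (hmono (Fin.zero_le i))
  have hP : P ∈ rowStochastic ℝ (Fin (n + 2)) := mem_rowStochastic_iff_sum.mpr ⟨hnonneg, hrow⟩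
  have hstat : θ ᵥ* P = θ := vecMul_eq_self_of_reversible (mem_rowStochastic.mp hP).2 hrev
  simpa only [meanZeroRayleighQuotients, wInner_eq_sum_mul, Pi.one_apply, mul_one] using
    reversible_second_eigenvalue_lower_bound_general hθ hsum hP hstat 0
end

section
/- Let P ∈ ℝ^{n×n} be a row-stochastic matrix reversible with respect to θ, and suppose the second largest eigenvalue attains its lower bound, i.e. ⟨Px, x⟩_θ ≤ −(θ₁/(1−θ₁)) ⟨x, x⟩_θ for every x ∈ ℝⁿ with ⟨x, 𝟙⟩_θ = 0. Then P₁₁ = 0, P_{1j} = θ_j/(1−θ₁) for every j ≥ 2, and P_{j1} = θ₁/(1−θ₁) for every j ≥ 2; moreover the lower-right submatrix (P_{ij})_{2≤i,j≤n} satisfies the detailed balance condition θ_i P_{ij} = θ_j P_{ji} with respect to the vector (θ₂, …, θ_n) and has constant row sums, each row summing to (1−2θ₁)/(1−θ₁). -/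
open Matrix

/-!
Let `D = diag θ` and `μ = -θ₁ / (1 - θ₁)`. The symmetric matrix
`M = μ • D + (1 - μ) • θ θᵀ - D * P` annihilates `𝟙`, and on the `θ`-orthogonal complement of `𝟙`
its quadratic form is `μ ⟨x, x⟩_θ - ⟨P x, x⟩_θ`, so the eigenvalue hypothesis says exactly that `M`
is positive semidefinite. For this `μ` one has `M₁₁ = -θ₁ P₁₁ ≤ 0`, so `M₁₁ = 0`. A positive
semidefinite matrix with a vanishing diagonal entry vanishes along the whole row, and `M₁ⱼ = 0`
is the formula for `P₁ⱼ`.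
-/

open scoped ComplexOrder in
theorem posSemidef_apply_eq_zero_of_diag_eq_zero {𝕜 ι : Type*} [RCLike 𝕜] [Finite ι]
    {A : Matrix ι ι 𝕜} (hA : A.PosSemidef) {i : ι} (hi : A i i = 0) (j : ι) : A i j = 0 := by
  classical
  have := Fintype.ofFinite ι
  have hcol : A *ᵥ Pi.single i 1 = 0 :=
    (hA.dotProduct_mulVec_zero_iff _).1 (by simpa [← Pi.single_star] using hi)
  have hji : A j i = 0 := by simpa using congrFun hcol j
  rw [← hA.1.apply, hji, star_zero]

theorem sub_dotProduct_mulVec_sub_of_mulVec_eq_zero {R ι : Type*} [CommRing R] [Fintype ι]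
    {A : Matrix ι ι R} (hA : A.IsSymm) {v : ι → R} (hv : A *ᵥ v = 0) (x : ι → R) :
    (x - v) ⬝ᵥ A *ᵥ (x - v) = x ⬝ᵥ A *ᵥ x := by
  have hv' : v ᵥ* A = 0 := by rw [← mulVec_transpose, hA.eq, hv]
  rw [mulVec_sub, hv, sub_zero, sub_dotProduct, dotProduct_mulVec v, hv', zero_dotProduct, sub_zero]

section GapMatrix

variable {R ι : Type*} [CommRing R] [Fintype ι] [DecidableEq ι]

/-- The matrix of the quadratic form `x ↦ μ ⟨x, x⟩_θ + (1 - μ) ⟨x, 𝟙⟩_θ ^ 2 - ⟨P x, x⟩_θ`, which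
measures by how much the spectrum of `P` on the `θ`-orthogonal complement of `𝟙` lies below `μ`.
The coefficient `1 - μ` makes `𝟙` a null vector when `θ` and the rows of `P` sum to one. -/
def gapMatrix (θ : ι → R) (P : Matrix ι ι R) (μ : R) : Matrix ι ι R :=
  μ • diagonal θ + (1 - μ) • vecMulVec θ θ - diagonal θ * P

variable {θ : ι → R} {P : Matrix ι ι R}

theorem gapMatrix_apply (μ : R) (i j : ι) :
    gapMatrix θ P μ i j = μ * diagonal θ i j + (1 - μ) * (θ i * θ j) - θ i * P i j := by
  simp [gapMatrix, vecMulVec_apply]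

theorem isSymm_gapMatrix (hrev : ∀ i j, θ i * P i j = θ j * P j i) (μ : R) :
    (gapMatrix θ P μ).IsSymm := by
  have hDP : (diagonal θ * P).IsSymm := IsSymm.ext fun i j => by
    rw [diagonal_mul, diagonal_mul, hrev]
  have hθθ : (vecMulVec θ θ).IsSymm := transpose_vecMulVec θ θ
  exact (((isSymm_diagonal θ).smul μ).add (hθθ.smul (1 - μ))).sub hDP

theorem gapMatrix_mulVec_one (hsum : ∑ i, θ i = 1) (hrow : ∀ i, ∑ j, P i j = 1) (μ : R) :
    gapMatrix θ P μ *ᵥ 1 = 0 := by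
  have hP : P *ᵥ 1 = 1 := funext fun i => by simp [mulVec, dotProduct, hrow]
  have hθ : θ ⬝ᵥ 1 = 1 := by rw [dotProduct_one, hsum]
  have hD : diagonal θ *ᵥ 1 = θ := funext fun i => by rw [mulVec_diagonal, Pi.one_apply, mul_one]
  rw [gapMatrix, sub_mulVec, add_mulVec, smul_mulVec, smul_mulVec, ← mulVec_mulVec,
    vecMulVec_mulVec, hP, hθ, hD, MulOpposite.op_one, one_smul, ← add_smul, add_sub_cancel,
    one_smul, sub_self]

theorem dotProduct_gapMatrix_mulVec (μ : R) (x : ι → R) :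
    x ⬝ᵥ gapMatrix θ P μ *ᵥ x =
      μ * ∑ i, x i * x i * θ i + (1 - μ) * (∑ i, x i * θ i) ^ 2 - ∑ i, (P *ᵥ x) i * x i * θ i := by
  have hθ : x ⬝ᵥ vecMulVec θ θ *ᵥ x = (∑ i, x i * θ i) ^ 2 := by
    rw [vecMulVec_mulVec, dotProduct_smul, dotProduct_comm θ x, op_smul_eq_mul, sq, dotProduct]
  have hD (y : ι → R) : x ⬝ᵥ diagonal θ *ᵥ y = ∑ i, y i * x i * θ i :=
    Finset.sum_congr rfl fun i _ => by rw [mulVec_diagonal]; ring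
  rw [gapMatrix, sub_mulVec, add_mulVec, smul_mulVec, smul_mulVec, ← mulVec_mulVec,
    dotProduct_sub, dotProduct_add, dotProduct_smul, dotProduct_smul, hD, hD, hθ, smul_eq_mul,
    smul_eq_mul]

end GapMatrix

section Field

variable {K ι : Type*} [Field K] [Fintype ι] [DecidableEq ι] {θ : ι → K} {P : Matrix ι ι K}

theorem gapMatrix_neg_div_apply_self {a : ι} (ha : θ a ≠ 1) :
    gapMatrix θ P (-(θ a / (1 - θ a))) a a = -(θ a * P a a) := by
  have : 1 - θ a ≠ 0 := sub_ne_zero.2 ha.symm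
  rw [gapMatrix_apply, diagonal_apply_eq]
  field_simp
  ring

theorem gapMatrix_neg_div_apply_of_ne {a j : ι} (ha : θ a ≠ 1) (hj : j ≠ a) :
    gapMatrix θ P (-(θ a / (1 - θ a))) a j = θ a * (θ j / (1 - θ a) - P a j) := by
  have : 1 - θ a ≠ 0 := sub_ne_zero.2 ha.symm
  rw [gapMatrix_apply, diagonal_apply_ne' _ hj]
  field_simp
  ring

end Field

section RealGapMatrix

variable {ι : Type*} [Fintype ι] [DecidableEq ι] {θ : ι → ℝ} {P : Matrix ι ι ℝ}

theorem posSemidef_gapMatrix {μ : ℝ} (hsum : ∑ i, θ i = 1) (hrow : ∀ i, ∑ j, P i j = 1)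
    (hrev : ∀ i j, θ i * P i j = θ j * P j i)
    (hgap : ∀ x : ι → ℝ, ∑ i, x i * θ i = 0 →
      ∑ i, (P *ᵥ x) i * x i * θ i ≤ μ * ∑ i, x i * x i * θ i) :
    (gapMatrix θ P μ).PosSemidef := by
  have hsymm := isSymm_gapMatrix hrev μ
  refine .of_dotProduct_mulVec_nonneg (isHermitian_iff_isSymm.2 hsymm) fun y => ?_
  set m : ℝ := ∑ i, y i * θ i with hm
  have hnull : gapMatrix θ P μ *ᵥ (m • 1) = 0 := by
    rw [mulVec_smul, gapMatrix_mulVec_one hsum hrow, smul_zero]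
  have hcentered : ∑ i, (y - m • 1) i * θ i = 0 := by
    simp [sub_mul, Finset.sum_sub_distrib, ← Finset.mul_sum, hsum, hm]
  rw [star_trivial, ← sub_dotProduct_mulVec_sub_of_mulVec_eq_zero hsymm hnull,
    dotProduct_gapMatrix_mulVec, hcentered, zero_pow two_ne_zero, mul_zero, add_zero]
  exact sub_nonneg.2 (hgap _ hcentered)

theorem apply_self_eq_zero_of_posSemidef_gapMatrix {a : ι} (hpos : 0 < θ a) (ha : θ a ≠ 1)
    (hPa : 0 ≤ P a a) (hM : (gapMatrix θ P (-(θ a / (1 - θ a)))).PosSemidef) : P a a = 0 := by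
  have hdiag := hM.diag_nonneg (i := a)
  rw [gapMatrix_neg_div_apply_self ha, neg_nonneg] at hdiag
  exact hPa.antisymm' (nonpos_of_mul_nonpos_right hdiag hpos)

theorem apply_eq_div_of_posSemidef_gapMatrix {a j : ι} (hθa : θ a ≠ 0) (ha : θ a ≠ 1)
    (hPa : P a a = 0) (hM : (gapMatrix θ P (-(θ a / (1 - θ a)))).PosSemidef) (hj : j ≠ a) :
    P a j = θ j / (1 - θ a) := by
  have hdiag : gapMatrix θ P (-(θ a / (1 - θ a))) a a = 0 := by
    rw [gapMatrix_neg_div_apply_self ha, hPa, mul_zero, neg_zero]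
  have hrow := posSemidef_apply_eq_zero_of_diag_eq_zero hM hdiag j
  rw [gapMatrix_neg_div_apply_of_ne ha hj, mul_eq_zero, or_iff_right hθa, sub_eq_zero] at hrow
  exact hrow.symm

end RealGapMatrix

theorem reversible_attaining_lower_bound_structure_general
    {ι : Type*} [Fintype ι] [DecidableEq ι] [Nontrivial ι] {θ : ι → ℝ}
    (hpos : ∀ i, 0 < θ i) (hsum : ∑ i, θ i = 1) {P : Matrix ι ι ℝ} {a : ι}
    (hPa : 0 ≤ P a a) (hrow : ∀ i, ∑ j, P i j = 1)
    (hrev : ∀ i j, θ i * P i j = θ j * P j i)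
    (hattain : ∀ x : ι → ℝ, ∑ i, x i * θ i = 0 →
      ∑ i, (P *ᵥ x) i * x i * θ i ≤ -(θ a / (1 - θ a)) * ∑ i, x i * x i * θ i) :
    P a a = 0 ∧
    (∀ j, j ≠ a → P a j = θ j / (1 - θ a)) ∧
    (∀ j, j ≠ a → P j a = θ a / (1 - θ a)) ∧
    (∀ i j, i ≠ a → j ≠ a → θ i * P i j = θ j * P j i) ∧
    (∀ i, i ≠ a → ∑ j ∈ Finset.univ.erase a, P i j = (1 - 2 * θ a) / (1 - θ a)) := by
  have hlt : θ a < 1 := by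
    obtain ⟨b, hb⟩ := exists_ne a
    exact hsum ▸ Finset.single_lt_sum hb (Finset.mem_univ a) (Finset.mem_univ b) (hpos b)
      fun i _ _ => (hpos i).le
  have hM := posSemidef_gapMatrix hsum hrow hrev hattain
  have haa : P a a = 0 := apply_self_eq_zero_of_posSemidef_gapMatrix (hpos a) hlt.ne hPa hM
  have haj : ∀ j, j ≠ a → P a j = θ j / (1 - θ a) := fun j =>
    apply_eq_div_of_posSemidef_gapMatrix (hpos a).ne' hlt.ne haa hM
  have hja : ∀ j, j ≠ a → P j a = θ a / (1 - θ a) := fun j hj =>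
    mul_left_cancel₀ (hpos j).ne' <| by rw [← hrev a j, haj j hj, mul_div_left_comm]
  refine ⟨haa, haj, hja, fun i j _ _ => hrev i j, fun i hi => ?_⟩
  have : 1 - θ a ≠ 0 := (sub_pos.2 hlt).ne'
  rw [Finset.sum_erase_eq_sub (Finset.mem_univ a), hrow, hja i hi]
  field_simp
  ring

/-- **Structure of a reversible stochastic matrix attaining the minimal second eigenvalue.**
Let `θ` be a probability vector on `n + 2 ≥ 2` states with `0 < θ 0` and nondecreasing
entries, and let `P` be row-stochastic and reversible w.r.t. `θ`. If the second largest
eigenvalue attains its lower bound, i.e. `⟨Px, x⟩_θ ≤ −(θ₁/(1−θ₁)) ⟨x, x⟩_θ` for every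
`x` with `⟨x, 𝟙⟩_θ = 0`, then `P 0 0 = 0`, `P 0 j = θ j / (1 − θ 0)` and
`P j 0 = θ 0 / (1 − θ 0)` for every `j ≠ 0`; moreover the lower-right submatrix
satisfies detailed balance w.r.t. `(θ j)_{j ≠ 0}` and has constant row sums, each row
summing to `(1 − 2 θ 0)/(1 − θ 0)`. -/
theorem reversible_attaining_lower_bound_structure
    (n : ℕ) (θ : Fin (n + 2) → ℝ)
    (hθ1 : 0 < θ 0) (hmono : Monotone θ) (hsum : ∑ i, θ i = 1)
    (P : Matrix (Fin (n + 2)) (Fin (n + 2)) ℝ)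
    (hnonneg : ∀ i j, 0 ≤ P i j) (hrow : ∀ i, ∑ j, P i j = 1)
    (hrev : ∀ i j, θ i * P i j = θ j * P j i)
    (hattain : ∀ x : Fin (n + 2) → ℝ, (∑ i, x i * θ i) = 0 →
      ∑ i, P.mulVec x i * x i * θ i ≤ -(θ 0 / (1 - θ 0)) * ∑ i, x i * x i * θ i) :
    P 0 0 = 0 ∧
    (∀ j, j ≠ 0 → P 0 j = θ j / (1 - θ 0)) ∧
    (∀ j, j ≠ 0 → P j 0 = θ 0 / (1 - θ 0)) ∧
    (∀ i j, i ≠ 0 → j ≠ 0 → θ i * P i j = θ j * P j i) ∧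
    (∀ i, i ≠ 0 → ∑ j ∈ Finset.univ.erase 0, P i j = (1 - 2 * θ 0) / (1 - θ 0)) :=
  reversible_attaining_lower_bound_structure_general
    (fun i => hθ1.trans_le (hmono (Fin.zero_le i))) hsum (hnonneg 0 0) hrow hrev hattain
end

section
/- The matrix P_A given by the recursive construction is a row-stochastic matrix (all entries nonnegative, every row sums to 1) and is reversible with respect to θ, i.e. θ_i (P_A)_{ij} = θ_j (P_A)_{ji} for all i, j; in particular θ is an invariant distribution of P_A: ∑_i θ_i (P_A)_{ij} = θ_j for all j. -/
/-!
Each step of the construction borders a matrix on `{k + 1, …, n}` with a new state `k`. Put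
`c = θ k / s (k + 1)`. The new row sums to `1`, and an old row with sum `r` now has sum
`c + (1 - c) * r`, so its defect `1 - r` is multiplied by `1 - c`. As `θ k ≤ s (k + 1)` gives
`0 ≤ c ≤ 1`, the bordering keeps full rows full and never pushes a row sum above `1`. The only
defective row is therefore that of the initial state `n`, and topping up its diagonal entry fills
it without disturbing detailed balance.
-/

section Bordering

open Finset

variable {ι R K : Type*}

/-- The matrix `P` on `insert a S` is obtained from the matrix `Q` on `S` by one step of the
recursive construction, which adds the state `a`. Matrices are functions on all of `ι`, of which
only the entries indexed by the relevant finite set matter. -/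
structure IsReversibleBordering [Field K] (θ : ι → K) (S : Finset ι) (a : ι) (Q P : ι → ι → K) :
    Prop where
  corner : P a a = 0
  row : ∀ j ∈ S, P a j = θ j / ∑ l ∈ S, θ l
  col : ∀ i ∈ S, P i a = θ a / ∑ l ∈ S, θ l
  block : ∀ i ∈ S, ∀ j ∈ S, P i j = (1 - θ a / ∑ l ∈ S, θ l) * Q i j

/-- The matrix `P'` on `S` is obtained from `P` by changing the diagonal entry at `m` so that the
row of `m` sums to `1`. -/
structure IsDiagonalCompletion [DecidableEq ι] [Ring R] (S : Finset ι) (m : ι) (P P' : ι → ι → R) :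
    Prop where
  eq_of_ne : ∀ i ∈ S, ∀ j ∈ S, ¬(i = m ∧ j = m) → P' i j = P i j
  diag : P' m m = 1 - ∑ j ∈ S.erase m, P m j

/-- The matrix `P` on `S` is nonnegative, in detailed balance with `θ`, and stochastic except that
the row of `m` may sum to less than `1`. This is the invariant of the recursive construction. -/
structure IsReversibleStochasticOff [Semiring R] [LE R] (θ : ι → R) (S : Finset ι) (m : ι)
    (P : ι → ι → R) : Prop where
  nonneg : ∀ i ∈ S, ∀ j ∈ S, 0 ≤ P i j
  sum_row_eq_one : ∀ i ∈ S, i ≠ m → ∑ j ∈ S, P i j = 1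
  sum_row_le_one : ∑ j ∈ S, P m j ≤ 1
  balance : ∀ i ∈ S, ∀ j ∈ S, θ i * P i j = θ j * P j i

variable {S : Finset ι} {a m : ι}

theorem sum_mul_eq_of_detailedBalance [Semiring R] {θ : ι → R} {P : ι → ι → R}
    (hbal : ∀ i ∈ S, ∀ j ∈ S, θ i * P i j = θ j * P j i)
    {j : ι} (hj : j ∈ S) (hrow : ∑ i ∈ S, P j i = 1) : ∑ i ∈ S, θ i * P i j = θ j :=
  calc ∑ i ∈ S, θ i * P i j = ∑ i ∈ S, θ j * P j i := sum_congr rfl fun i hi ↦ hbal i hi j hj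
    _ = θ j := by rw [← mul_sum, hrow, mul_one]

namespace IsReversibleBordering

variable [DecidableEq ι] [Field K] {θ : ι → K} {P Q : ι → ι → K}

theorem balance (h : IsReversibleBordering θ S a Q P)
    (hQ : ∀ i ∈ S, ∀ j ∈ S, θ i * Q i j = θ j * Q j i) :
    ∀ i ∈ insert a S, ∀ j ∈ insert a S, θ i * P i j = θ j * P j i := by
  simp only [forall_mem_insert]
  refine ⟨⟨trivial, fun j hj ↦ ?_⟩, fun i hi ↦ ⟨?_, fun j hj ↦ ?_⟩⟩
  · rw [h.row j hj, h.col j hj, mul_div_left_comm]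
  · rw [h.row i hi, h.col i hi, mul_div_left_comm]
  · rw [h.block i hi j hj, h.block j hj i hi, mul_left_comm, hQ i hi j hj, mul_left_comm]

theorem sum_new_row (h : IsReversibleBordering θ S a Q P) (ha : a ∉ S)
    (hS : ∑ l ∈ S, θ l ≠ 0) : ∑ j ∈ insert a S, P a j = 1 := by
  rw [sum_insert ha, h.corner, zero_add, sum_congr rfl h.row, ← sum_div, div_self hS]

theorem sum_old_row (h : IsReversibleBordering θ S a Q P) (ha : a ∉ S)
    {i : ι} (hi : i ∈ S) :
    ∑ j ∈ insert a S, P i j =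
      θ a / ∑ l ∈ S, θ l + (1 - θ a / ∑ l ∈ S, θ l) * ∑ j ∈ S, Q i j := by
  rw [sum_insert ha, h.col i hi, sum_congr rfl (h.block i hi), mul_sum]

variable [LinearOrder K] [IsStrictOrderedRing K]

theorem nonneg (h : IsReversibleBordering θ S a Q P)
    (hθ : ∀ i ∈ insert a S, 0 ≤ θ i) (ha : θ a ≤ ∑ l ∈ S, θ l)
    (hQ : ∀ i ∈ S, ∀ j ∈ S, 0 ≤ Q i j) :
    ∀ i ∈ insert a S, ∀ j ∈ insert a S, 0 ≤ P i j := by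
  obtain ⟨hθa, hθS⟩ := (forall_mem_insert ..).1 hθ
  have hS : 0 ≤ ∑ l ∈ S, θ l := sum_nonneg hθS
  simp only [forall_mem_insert]
  refine ⟨⟨h.corner.ge, fun j hj ↦ ?_⟩, fun i hi ↦ ⟨?_, fun j hj ↦ ?_⟩⟩
  · exact h.row j hj ▸ div_nonneg (hθS j hj) hS
  · exact h.col i hi ▸ div_nonneg hθa hS
  · exact h.block i hi j hj ▸
      mul_nonneg (sub_nonneg.2 (div_le_one_of_le₀ ha hS)) (hQ i hi j hj)

theorem isReversibleStochasticOff (h : IsReversibleBordering θ S a Q P)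
    (hθ : ∀ i ∈ insert a S, 0 ≤ θ i) (hS : 0 < ∑ l ∈ S, θ l) (ha : θ a ≤ ∑ l ∈ S, θ l)
    (haS : a ∉ S) (hm : m ∈ S) (hQ : IsReversibleStochasticOff θ S m Q) :
    IsReversibleStochasticOff θ (insert a S) m P where
  nonneg := h.nonneg hθ ha hQ.nonneg
  balance := h.balance hQ.balance
  sum_row_eq_one := by
    refine (forall_mem_insert ..).2 ⟨fun _ ↦ h.sum_new_row haS hS.ne', fun i hi him ↦ ?_⟩
    rw [h.sum_old_row haS hi, hQ.sum_row_eq_one i hi him, mul_one, add_sub_cancel]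
  sum_row_le_one := by
    have hc : 0 ≤ 1 - θ a / ∑ l ∈ S, θ l := sub_nonneg.2 ((div_le_one hS).2 ha)
    calc ∑ j ∈ insert a S, P m j
        = θ a / ∑ l ∈ S, θ l + (1 - θ a / ∑ l ∈ S, θ l) * ∑ j ∈ S, Q m j :=
          h.sum_old_row haS hm
      _ ≤ θ a / ∑ l ∈ S, θ l + (1 - θ a / ∑ l ∈ S, θ l) * 1 := by
          gcongr
          exact hQ.sum_row_le_one
      _ = 1 := by ring

end IsReversibleBordering

namespace IsDiagonalCompletion

variable [DecidableEq ι] [Ring R] {P P' : ι → ι → R}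

theorem balance {θ : ι → R} (h : IsDiagonalCompletion S m P P')
    (hP : ∀ i ∈ S, ∀ j ∈ S, θ i * P i j = θ j * P j i) :
    ∀ i ∈ S, ∀ j ∈ S, θ i * P' i j = θ j * P' j i := by
  intro i hi j hj
  by_cases hij : i = m ∧ j = m
  · rw [hij.1, hij.2]
  · rw [h.eq_of_ne i hi j hj hij, h.eq_of_ne j hj i hi (mt And.symm hij), hP i hi j hj]

theorem sum_row_eq_one (h : IsDiagonalCompletion S m P P') (hm : m ∈ S)
    (hP : ∀ i ∈ S, i ≠ m → ∑ j ∈ S, P i j = 1) : ∀ i ∈ S, ∑ j ∈ S, P' i j = 1 := by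
  intro i hi
  rcases eq_or_ne i m with rfl | him
  · have hoff : ∑ j ∈ S.erase i, P' i j = ∑ j ∈ S.erase i, P i j := sum_congr rfl fun j hj ↦
      h.eq_of_ne i hi j (mem_of_mem_erase hj) fun hij ↦ ne_of_mem_erase hj hij.2
    rw [← add_sum_erase S _ hi, h.diag, hoff, sub_add_cancel]
  · rw [← hP i hi him]
    exact sum_congr rfl fun j hj ↦ h.eq_of_ne i hi j hj fun hij ↦ him hij.1

theorem nonneg [PartialOrder R] [IsOrderedAddMonoid R] (h : IsDiagonalCompletion S m P P')
    (hm : m ∈ S) (hP : ∀ i ∈ S, ∀ j ∈ S, 0 ≤ P i j) (hrow : ∑ j ∈ S, P m j ≤ 1) :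
    ∀ i ∈ S, ∀ j ∈ S, 0 ≤ P' i j := by
  intro i hi j hj
  by_cases hij : i = m ∧ j = m
  · rw [hij.1, hij.2, h.diag, sub_nonneg]
    exact (sum_le_sum_of_subset_of_nonneg (erase_subset m S) fun l hl _ ↦ hP m hm l hl).trans hrow
  · exact h.eq_of_ne i hi j hj hij ▸ hP i hi j hj

end IsDiagonalCompletion

end Bordering

section Recursion

open Finset

variable {k n : ℕ}

theorem le_sum_Icc_succ {M : Type*} [AddCommMonoid M] [PartialOrder M] [IsOrderedAddMonoid M]
    {θ : ℕ → M} (hθ : ∀ i ∈ Icc (k + 1) n, 0 ≤ θ i) (hkn : k < n)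
    (hle : θ k ≤ θ (k + 1)) : θ k ≤ ∑ l ∈ Icc (k + 1) n, θ l :=
  hle.trans (single_le_sum hθ (left_mem_Icc.2 hkn))

variable {K : Type*} [Field K] [LinearOrder K] [IsStrictOrderedRing K] {θ : ℕ → K}

theorem isReversibleStochasticOff_Icc {P : ℕ → ℕ → ℕ → K}
    (hθ : ∀ i ∈ Icc k n, 0 ≤ θ i) (hθn : 0 < θ n)
    (hdom : ∀ l ∈ Ico k n, θ l ≤ ∑ i ∈ Icc (l + 1) n, θ i) (htop : P n n n = 0)
    (hP : ∀ l ∈ Ico k n, IsReversibleBordering θ (Icc (l + 1) n) l (P (l + 1)) (P l))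
    (hkn : k ≤ n) : IsReversibleStochasticOff θ (Icc k n) n (P k) := by
  induction hkn using Nat.decreasingInduction with
  | self => constructor <;> simp [htop]
  | of_succ l hln ih =>
    have hsub : Icc (l + 1) n ⊆ Icc l n := Icc_subset_Icc_left l.le_succ
    have hsub' : Ico (l + 1) n ⊆ Ico l n := Ico_subset_Ico_left l.le_succ
    have hl : l ∈ Ico l n := left_mem_Ico.2 hln
    have hn : n ∈ Icc (l + 1) n := right_mem_Icc.2 hln
    have hθS : ∀ i ∈ Icc (l + 1) n, 0 ≤ θ i := fun i hi ↦ hθ i (hsub hi)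
    have hinsert : insert l (Icc (l + 1) n) = Icc l n := insert_Icc_succ_left_eq_Icc hln.le
    rw [← hinsert] at hθ ⊢
    exact (hP l hl).isReversibleStochasticOff hθ (sum_pos' hθS ⟨n, hn, hθn⟩) (hdom l hl)
      (by simp) hn
      (ih hθS (fun i hi ↦ hdom i (hsub' hi)) fun i hi ↦ hP i (hsub' hi))

theorem recursive_construction_is_reversible_stochastic_general
    (hn : 1 ≤ n) (hθ : ∀ i, 1 ≤ i → i ≤ n → 0 ≤ θ i) (hθn : 0 < θ n)
    {s : ℕ → K} (hs : ∀ k, s k = ∑ l ∈ Icc k n, θ l)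
    (hdom : ∀ k, 1 ≤ k → k < n → θ k ≤ s (k + 1))
    {Pk : ℕ → ℕ → ℕ → K} (hPtop : Pk n n n = 0)
    (hPdiag : ∀ k, 1 ≤ k → k < n → Pk k k k = 0)
    (hProw : ∀ k j, 1 ≤ k → k < j → j ≤ n → Pk k k j = θ j / s (k + 1))
    (hPcol : ∀ k j, 1 ≤ k → k < j → j ≤ n → Pk k j k = θ k / s (k + 1))
    (hPrec : ∀ k i j, 1 ≤ k → k < i → i ≤ n → k < j → j ≤ n →
      Pk k i j = (1 - θ k / s (k + 1)) * Pk (k + 1) i j)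
    {PA : ℕ → ℕ → K}
    (hPA : ∀ i j, 1 ≤ i → i ≤ n → 1 ≤ j → j ≤ n → ¬(i = n ∧ j = n) → PA i j = Pk 1 i j)
    (hPAnn : PA n n = 1 - ∑ j ∈ Icc 1 (n - 1), Pk 1 n j) :
    (∀ i j, 1 ≤ i → i ≤ n → 1 ≤ j → j ≤ n → 0 ≤ PA i j) ∧
    (∀ i, 1 ≤ i → i ≤ n → ∑ j ∈ Icc 1 n, PA i j = 1) ∧
    (∀ i j, 1 ≤ i → i ≤ n → 1 ≤ j → j ≤ n → θ i * PA i j = θ j * PA j i) ∧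
    (∀ j, 1 ≤ j → j ≤ n → ∑ i ∈ Icc 1 n, θ i * PA i j = θ j) := by
  have hbordering : ∀ k ∈ Ico 1 n,
      IsReversibleBordering θ (Icc (k + 1) n) k (Pk (k + 1)) (Pk k) := by
    intro k hk
    obtain ⟨hk, hkn⟩ := mem_Ico.1 hk
    have hS : ∑ l ∈ Icc (k + 1) n, θ l = s (k + 1) := (hs (k + 1)).symm
    constructor
    case corner => exact hPdiag k hk hkn
    all_goals simpa only [mem_Icc, Nat.succ_le_iff, hS] using by grind
  have hcompletion : IsDiagonalCompletion (Icc 1 n) n (Pk 1) PA :=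
    { eq_of_ne := by simpa only [mem_Icc] using by grind
      diag := by
        rw [hPAnn, Icc_erase_right,
          Icc_sub_one_right_eq_Ico_of_not_isMin (not_isMin_of_lt hn)] }
  have hP : IsReversibleStochasticOff θ (Icc 1 n) n (Pk 1) :=
    isReversibleStochasticOff_Icc (by simpa using hθ) hθn (by simpa [← hs] using hdom) hPtop
      hbordering hn
  have hnmem : n ∈ Icc 1 n := right_mem_Icc.2 hn
  have hnonneg := hcompletion.nonneg hnmem hP.nonneg hP.sum_row_le_one
  have hrow := hcompletion.sum_row_eq_one hnmem hP.sum_row_eq_one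
  have hbal := hcompletion.balance hP.balance
  have hinv : ∀ j ∈ Icc 1 n, ∑ i ∈ Icc 1 n, θ i * PA i j = θ j :=
    fun j hj ↦ sum_mul_eq_of_detailedBalance hbal hj (hrow j hj)
  simp only [mem_Icc, and_imp] at hnonneg hrow hbal hinv
  exact ⟨fun i j hi hi' hj hj' ↦ hnonneg i hi hi' j hj hj', hrow,
    fun i j hi hi' hj hj' ↦ hbal i hi hi' j hj hj', hinv⟩

end Recursion

/-- **The recursive construction yields a reversible stochastic matrix.**
States are indexed by `1, …, n` (with `n ≥ 2`); `θ` is a positive nondecreasing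
probability vector on these indices, and `s k = ∑_{l=k}^n θ l`. The matrices
`Pk k` (with rows and columns in `{k, …, n}`) are defined recursively:
`Pk n` is the 1×1 zero matrix; and for `1 ≤ k < n`, `(Pk k)_{kk} = 0`,
`(Pk k)_{kj} = θ j / s (k+1)` and `(Pk k)_{jk} = θ k / s (k+1)` for `j > k`, and
`(Pk k)_{ij} = (1 − θ k / s (k+1)) (Pk (k+1))_{ij}` for `i, j > k`. The matrix `PA`
agrees with `Pk 1` everywhere except `(PA)_{nn} = 1 − ∑_{j=1}^{n−1} (Pk 1)_{nj}`.
Then `PA` is row-stochastic and reversible w.r.t. `θ`; in particular `θ` is an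
invariant distribution of `PA`. -/
theorem recursive_construction_is_reversible_stochastic
    (n : ℕ) (hn : 2 ≤ n) (θ : ℕ → ℝ)
    (hpos : ∀ i, 1 ≤ i → i ≤ n → 0 < θ i)
    (hmono : ∀ i j, 1 ≤ i → i ≤ j → j ≤ n → θ i ≤ θ j)
    (hsum : ∑ i ∈ Finset.Icc 1 n, θ i = 1)
    (s : ℕ → ℝ) (hs : ∀ k, s k = ∑ l ∈ Finset.Icc k n, θ l)
    (Pk : ℕ → ℕ → ℕ → ℝ)
    (hPtop : Pk n n n = 0)
    (hPdiag : ∀ k, 1 ≤ k → k < n → Pk k k k = 0)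
    (hProw : ∀ k j, 1 ≤ k → k < j → j ≤ n → Pk k k j = θ j / s (k + 1))
    (hPcol : ∀ k j, 1 ≤ k → k < j → j ≤ n → Pk k j k = θ k / s (k + 1))
    (hPrec : ∀ k i j, 1 ≤ k → k < i → i ≤ n → k < j → j ≤ n →
      Pk k i j = (1 - θ k / s (k + 1)) * Pk (k + 1) i j)
    (PA : ℕ → ℕ → ℝ)
    (hPA : ∀ i j, 1 ≤ i → i ≤ n → 1 ≤ j → j ≤ n → ¬(i = n ∧ j = n) → PA i j = Pk 1 i j)
    (hPAnn : PA n n = 1 - ∑ j ∈ Finset.Icc 1 (n - 1), Pk 1 n j) :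
    (∀ i j, 1 ≤ i → i ≤ n → 1 ≤ j → j ≤ n → 0 ≤ PA i j) ∧
    (∀ i, 1 ≤ i → i ≤ n → ∑ j ∈ Finset.Icc 1 n, PA i j = 1) ∧
    (∀ i j, 1 ≤ i → i ≤ n → 1 ≤ j → j ≤ n → θ i * PA i j = θ j * PA j i) ∧
    (∀ j, 1 ≤ j → j ≤ n → ∑ i ∈ Finset.Icc 1 n, θ i * PA i j = θ j) :=
  recursive_construction_is_reversible_stochastic_general (by omega)
    (fun i h1 hi ↦ (hpos i h1 hi).le) (hpos n (by omega) le_rfl) hs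
    (fun k hk hkn ↦ hs (k + 1) ▸ le_sum_Icc_succ (by grind) hkn (by grind))
    hPtop hPdiag hProw hPcol hPrec hPA hPAnn
end

section
/- Let P ∈ ℝ^{n×n} be an irreducible row-stochastic matrix reversible with respect to θ, and set λ₂ = sup{ ⟨Px, x⟩_θ : x ∈ ℝⁿ, ⟨x, 𝟙⟩_θ = 0, ‖x‖_θ = 1 } (so λ₂ < 1). Then the supremum of the asymptotic variance ν(f, P) over all θ-mean-zero f ∈ ℝⁿ with ‖f‖_θ = 1 equals (1 + λ₂)/(1 − λ₂), and this supremum is attained. -/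
open Matrix

/-!
Reversibility makes `P` self-adjoint for the `θ`-weighted inner product, the Dirichlet form identity
gives `⟨P x, x⟩ ≤ ⟨x, x⟩`, and the maximum principle together with irreducibility identifies the
fixed vectors of `P` with the constants. So the mean-zero vectors form the orthogonal complement of
the fixed space, `P` preserves it, and by compactness `λ₂` is attained there at an eigenvector `x`;
`λ₂ < 1` because `x` is not fixed. Taking `f = x` and `g = (1 - λ₂)⁻¹ x` gives the variance
`(1 + λ₂) / (1 - λ₂)`. Conversely, if `h` is the mean-zero solution of `(1 - P) h = f`, the gap
inequality `(1 - λ₂) ⟨h, h⟩ ≤ ⟨h, f⟩` inserted into `0 ≤ ‖f - (1 - λ₂) h‖²` yields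
`(1 - λ₂) ⟨h, f⟩ ≤ ⟨f, f⟩`.
-/

open Module.End
open scoped InnerProductSpace

section Operator

variable {E : Type*} [NormedAddCommGroup E] [InnerProductSpace ℝ E] {T : E →ₗ[ℝ] E}

/-- The values `⟪T x, x⟫` of the quadratic form of `T` at the unit vectors orthogonal to the fixed
space of `T`. Their supremum is the second eigenvalue `λ₂` when `T` is a reversible transition
operator. Unit vectors are encoded by `⟪x, x⟫ = 1` because on `ι → ℝ` the notation `‖x‖` means the
sup norm. -/
def unitRayleighValues (T : E →ₗ[ℝ] E) : Set ℝ :=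
  {r | ∃ x : E, x ∈ (eigenspace T 1)ᗮ ∧ ⟪x, x⟫_ℝ = 1 ∧ r = ⟪T x, x⟫_ℝ}

/-- The asymptotic variances `2 ⟪g, f⟫ - ⟪f, f⟫` of the unit vectors `f` orthogonal to the fixed
space of `T`, where `g` is any solution of the Poisson equation `g - T g = f`. -/
def unitAsymptoticVariances (T : E →ₗ[ℝ] E) : Set ℝ :=
  {v | ∃ f g : E, f ∈ (eigenspace T 1)ᗮ ∧ ⟪f, f⟫_ℝ = 1 ∧ g - T g = f ∧ v = 2 * ⟪g, f⟫_ℝ - 1}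

theorem one_sub_mul_inner_le_inner_self {c : ℝ} (hc : c ≤ 1) {h f : E} (hf : h - T h = f)
    (hle : ⟪T h, h⟫_ℝ ≤ c * ⟪h, h⟫_ℝ) : (1 - c) * ⟪h, f⟫_ℝ ≤ ⟪f, f⟫_ℝ := by
  have hgap : (1 - c) * ⟪h, h⟫_ℝ ≤ ⟪h, f⟫_ℝ := by
    rw [← hf, inner_sub_right, real_inner_comm (T h)]
    linarith
  have hsq : ⟪f - (1 - c) • h, f - (1 - c) • h⟫_ℝ
      = ⟪f, f⟫_ℝ - 2 * ((1 - c) * ⟪h, f⟫_ℝ) + (1 - c) * ((1 - c) * ⟪h, h⟫_ℝ) := by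
    rw [real_inner_sub_sub_self, real_inner_smul_right, real_inner_smul_left,
      real_inner_smul_right, real_inner_comm h f]
  have hnonneg : 0 ≤ ⟪f - (1 - c) • h, f - (1 - c) • h⟫_ℝ := real_inner_self_nonneg
  linarith [mul_le_mul_of_nonneg_left hgap (sub_nonneg.2 hc)]

theorem smul_sub_apply_smul_of_apply_eq_smul {c : ℝ} (hc : c ≠ 1) {x : E} (hx : T x = c • x) :
    (1 - c)⁻¹ • x - T ((1 - c)⁻¹ • x) = x := by
  have hx' : x - T x = (1 - c) • x := by rw [hx, sub_smul, one_smul]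
  rw [map_smul, ← smul_sub, hx', inv_smul_smul₀ (sub_ne_zero.2 hc.symm)]

variable [FiniteDimensional ℝ E]

theorem exists_mem_orthogonal_sub_apply_eq {f g : E} (hf : f ∈ (eigenspace T 1)ᗮ)
    (hg : g - T g = f) : ∃ h ∈ (eigenspace T 1)ᗮ, h - T h = f ∧ ⟪h, f⟫_ℝ = ⟪g, f⟫_ℝ := by
  obtain ⟨p, hp, h, hh, rfl⟩ :=
    Submodule.exists_add_mem_mem_orthogonal (K := eigenspace T 1) g
  have hTp : T p = p := by simpa using mem_eigenspace_iff.1 hp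
  refine ⟨h, hh, ?_, ?_⟩
  · rw [← hg, map_add, hTp, add_sub_add_left_eq_sub]
  · rw [inner_add_left, Submodule.inner_right_of_mem_orthogonal hp hf, zero_add]

theorem exists_unit_eigenvector_forall_inner_le [Nontrivial E] (hT : T.IsSymmetric) :
    ∃ (c : ℝ) (x : E), ⟪x, x⟫_ℝ = 1 ∧ T x = c • x ∧ ∀ y, ⟪T y, y⟫_ℝ ≤ c * ⟪y, y⟫_ℝ := by
  have hbdd : BddAbove (Set.range fun x : {x : E // x ≠ 0} ↦ ⟪T x, x⟫_ℝ / ‖(x : E)‖ ^ 2) :=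
    ⟨‖T.toContinuousLinearMap‖, by
      rintro _ ⟨x, rfl⟩
      exact (le_abs_self _).trans (T.toContinuousLinearMap.rayleighQuotient_le_norm x)⟩
  obtain ⟨x, hx⟩ := hT.hasEigenvalue_iSup_of_finiteDimensional.exists_hasEigenvector
  refine ⟨⨆ x : {x : E // x ≠ 0}, ⟪T x, x⟫_ℝ / ‖(x : E)‖ ^ 2, ‖x‖⁻¹ • x, ?_, ?_, fun y ↦ ?_⟩
  · have hunit : ‖‖x‖⁻¹ • x‖ = 1 := norm_smul_inv_norm (𝕜 := ℝ) hx.2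
    rw [real_inner_self_eq_norm_sq, hunit, one_pow]
  · rw [map_smul, hx.apply_eq_smul, smul_comm]
    rfl
  · rw [real_inner_self_eq_norm_sq]
    obtain rfl | hy := eq_or_ne y 0
    · simp
    · exact (div_le_iff₀ (by positivity)).1 (le_ciSup hbdd ⟨y, hy⟩)

theorem exists_unit_eigenvector_mem_orthogonal_eigenspace (hT : T.IsSymmetric)
    (hne : eigenspace T 1 ≠ ⊤) :
    ∃ (c : ℝ) (x : E), x ∈ (eigenspace T 1)ᗮ ∧ ⟪x, x⟫_ℝ = 1 ∧ T x = c • x ∧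
      ∀ y ∈ (eigenspace T 1)ᗮ, ⟪T y, y⟫_ℝ ≤ c * ⟪y, y⟫_ℝ := by
  have hinv := hT.invariant_orthogonalComplement_eigenspace 1
  have : Nontrivial (eigenspace T 1)ᗮ :=
    Submodule.nontrivial_iff_ne_bot.2 (mt Submodule.orthogonal_eq_bot_iff.1 hne)
  obtain ⟨c, x, hx, hTx, hle⟩ :=
    exists_unit_eigenvector_forall_inner_le (hT.restrict_invariant hinv)
  exact ⟨c, x, x.2, hx, congrArg Subtype.val hTx, fun y hy ↦ hle ⟨y, hy⟩⟩

theorem exists_isGreatest_unitRayleighValues_unitAsymptoticVariances (hT : T.IsSymmetric)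
    (hle : ∀ x, ⟪T x, x⟫_ℝ ≤ ⟪x, x⟫_ℝ) (hne : eigenspace T 1 ≠ ⊤) :
    ∃ c < 1, IsGreatest (unitRayleighValues T) c ∧
      IsGreatest (unitAsymptoticVariances T) ((1 + c) / (1 - c)) := by
  obtain ⟨c, x, hxF, hx, hTx, hmax⟩ := exists_unit_eigenvector_mem_orthogonal_eigenspace hT hne
  have hTxx : ⟪T x, x⟫_ℝ = c := by rw [hTx, real_inner_smul_left, hx, mul_one]
  have hc : c < 1 := by
    refine lt_of_le_of_ne (by simpa only [hTxx, hx] using hle x) ?_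
    rintro rfl
    have hxx : ⟪x, x⟫_ℝ = 0 :=
      Submodule.inner_right_of_mem_orthogonal (mem_eigenspace_iff.2 hTx) hxF
    exact one_ne_zero (hx.symm.trans hxx)
  have hc' : 0 < 1 - c := sub_pos.2 hc
  refine ⟨c, hc, ⟨⟨x, hxF, hx, hTxx.symm⟩, ?_⟩, ⟨x, (1 - c)⁻¹ • x, hxF, hx,
    smul_sub_apply_smul_of_apply_eq_smul hc.ne hTx, ?_⟩, ?_⟩
  · rintro _ ⟨y, hyF, hy, rfl⟩
    simpa only [hy, mul_one] using hmax y hyF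
  · rw [real_inner_smul_left, hx]
    field_simp
    ring
  · rintro _ ⟨f, g, hfF, hf, hg, rfl⟩
    obtain ⟨h, hhF, hh, hhf⟩ := exists_mem_orthogonal_sub_apply_eq hfF hg
    have hbound := one_sub_mul_inner_le_inner_self hc.le hh (hmax h hhF)
    rw [hf, hhf] at hbound
    rw [le_div_iff₀ hc']
    linarith

end Operator

section Reversible

variable {ι R : Type*} [Fintype ι] [CommRing R] {θ : ι → R} {P : Matrix ι ι R}

theorem sum_mulVec_mul_eq_of_reversible (hrev : ∀ i j, θ i * P i j = θ j * P j i) (x y : ι → R) :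
    ∑ i, (P *ᵥ x) i * y i * θ i = ∑ i, x i * (P *ᵥ y) i * θ i := by
  simp only [mulVec, dotProduct, Finset.sum_mul, Finset.mul_sum]
  rw [Finset.sum_comm]
  refine Finset.sum_congr rfl fun i _ ↦ Finset.sum_congr rfl fun j _ ↦ ?_
  linear_combination x i * y j * hrev j i

theorem sum_mul_sub_sq_eq_of_reversible (hP : ∀ i, ∑ j, P i j = 1)
    (hrev : ∀ i j, θ i * P i j = θ j * P j i) (x : ι → R) :
    ∑ i, ∑ j, θ i * P i j * (x i - x j) ^ 2 =
      2 * (∑ i, x i * x i * θ i - ∑ i, (P *ᵥ x) i * x i * θ i) := by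
  have hfst : ∑ i, ∑ j, θ i * P i j * x i ^ 2 = ∑ i, x i * x i * θ i :=
    Finset.sum_congr rfl fun i _ ↦ by
      rw [← Finset.sum_mul, ← Finset.mul_sum, hP]
      ring
  have hsnd : ∑ i, ∑ j, θ i * P i j * x j ^ 2 = ∑ i, x i * x i * θ i := by
    rw [← hfst, Finset.sum_comm]
    simp only [hrev]
  have hcross : ∑ i, ∑ j, θ i * P i j * (x i * x j) = ∑ i, (P *ᵥ x) i * x i * θ i := by
    simp only [mulVec, dotProduct, Finset.sum_mul]
    exact Finset.sum_congr rfl fun i _ ↦ Finset.sum_congr rfl fun j _ ↦ by ring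
  calc ∑ i, ∑ j, θ i * P i j * (x i - x j) ^ 2
      = ∑ i, ∑ j, θ i * P i j * x i ^ 2 + ∑ i, ∑ j, θ i * P i j * x j ^ 2
        - 2 * ∑ i, ∑ j, θ i * P i j * (x i * x j) := by
        simp only [Finset.mul_sum, ← Finset.sum_add_distrib, ← Finset.sum_sub_distrib]
        exact Finset.sum_congr rfl fun i _ ↦ Finset.sum_congr rfl fun j _ ↦ by ring
    _ = _ := by rw [hfst, hsnd, hcross]; ring

end Reversible

section Stochastic

variable {ι : Type*} [Fintype ι] [DecidableEq ι] {θ : ι → ℝ} {P : Matrix ι ι ℝ}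

theorem sum_mulVec_mul_self_le_of_reversible (hθ : ∀ i, 0 ≤ θ i) (hP : P ∈ rowStochastic ℝ ι)
    (hrev : ∀ i j, θ i * P i j = θ j * P j i) (x : ι → ℝ) :
    ∑ i, (P *ᵥ x) i * x i * θ i ≤ ∑ i, x i * x i * θ i := by
  have hnonneg : 0 ≤ ∑ i, ∑ j, θ i * P i j * (x i - x j) ^ 2 :=
    Finset.sum_nonneg fun i _ ↦ Finset.sum_nonneg fun j _ ↦
      mul_nonneg (mul_nonneg (hθ i) (nonneg_of_mem_rowStochastic hP)) (sq_nonneg _)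
  rw [sum_mul_sub_sq_eq_of_reversible (sum_row_of_mem_rowStochastic hP) hrev] at hnonneg
  linarith

theorem pow_mulVec_eq_self {R : Type*} [Semiring R] {A : Matrix ι ι R} {x : ι → R}
    (hx : A *ᵥ x = x) (m : ℕ) : (A ^ m) *ᵥ x = x := by
  induction m with
  | zero => rw [pow_zero, one_mulVec]
  | succ m ih => rw [pow_succ, ← mulVec_mulVec, hx, ih]

theorem apply_eq_of_mulVec_eq_self_of_forall_le {x : ι → ℝ} {i j : ι}
    (hP : P ∈ rowStochastic ℝ ι) (hx : P *ᵥ x = x) (hmax : ∀ k, x k ≤ x i) (hij : 0 < P i j) :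
    x j = x i := by
  have hnonneg : ∀ k ∈ Finset.univ, 0 ≤ P i k * (x i - x k) := fun k _ ↦
    mul_nonneg (nonneg_of_mem_rowStochastic hP) (sub_nonneg.2 (hmax k))
  have hsum : ∑ k, P i k * (x i - x k) = 0 := by
    have hxi : ∑ k, P i k * x k = x i := congrFun hx i
    simp only [mul_sub, Finset.sum_sub_distrib, ← Finset.sum_mul,
      sum_row_of_mem_rowStochastic hP, hxi, one_mul, sub_self]
  have hj := (Finset.sum_eq_zero_iff_of_nonneg hnonneg).1 hsum j (Finset.mem_univ j)
  exact (sub_eq_zero.1 ((mul_eq_zero.1 hj).resolve_left hij.ne')).symm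

theorem eigenspace_mulVecLin_one_eq_span_one [Nonempty ι] (hP : P ∈ rowStochastic ℝ ι)
    (hirr : P.IsIrreducible) : eigenspace P.mulVecLin 1 = Submodule.span ℝ {1} := by
  ext x
  rw [mem_eigenspace_iff, mulVecLin_apply, one_smul, Submodule.mem_span_singleton]
  constructor
  · intro hx
    obtain ⟨i, hmax⟩ := Finite.exists_max x
    refine ⟨x i, funext fun j ↦ ?_⟩
    obtain ⟨m, -, hm⟩ := (isIrreducible_iff_exists_pow_pos hirr.nonneg).1 hirr i j
    have hji := apply_eq_of_mulVec_eq_self_of_forall_le (pow_mem hP m)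
      (pow_mulVec_eq_self hx m) hmax hm
    rw [hji, Pi.smul_apply, Pi.one_apply, smul_eq_mul, mul_one]
  · rintro ⟨a, rfl⟩
    rw [mulVec_smul, one_vecMul_of_mem_rowStochastic hP]

theorem span_one_ne_top {α K : Type*} [Nontrivial α] [Field K] :
    Submodule.span K {(1 : α → K)} ≠ ⊤ := by
  classical
  obtain ⟨i, j, hij⟩ := exists_pair_ne α
  intro htop
  obtain ⟨a, ha⟩ := Submodule.mem_span_singleton.1 (htop ▸ Submodule.mem_top (x := Pi.single i 1))
  have hi : a = 1 := by simpa using congrFun ha i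
  have hj : a = 0 := by simpa [hij.symm] using congrFun ha j
  exact one_ne_zero (hi.symm.trans hj)

theorem reversible_worst_case_asymptotic_variance_general [Nontrivial ι] (hθ : ∀ i, 0 < θ i)
    (hP : P ∈ rowStochastic ℝ ι) (hrev : ∀ i j, θ i * P i j = θ j * P j i)
    (hirr : P.IsIrreducible) (lam2 : ℝ)
    (hlam2 : lam2 = sSup {r : ℝ | ∃ x : ι → ℝ,
      ∑ i, x i * θ i = 0 ∧ ∑ i, x i * x i * θ i = 1 ∧ r = ∑ i, (P *ᵥ x) i * x i * θ i}) :
    lam2 < 1 ∧ IsGreatest {v : ℝ | ∃ f g : ι → ℝ,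
      ∑ i, f i * θ i = 0 ∧ ∑ i, f i * f i * θ i = 1 ∧ (1 - P) *ᵥ g = f ∧
      v = 2 * ∑ i, g i * f i * θ i - 1} ((1 + lam2) / (1 - lam2)) := by
  have hpd : (diagonal θ).PosDef := .diagonal hθ
  -- `ι → ℝ` carries the sup norm globally, so the seminorm has to be overridden as well.
  let := (diagonal θ).toNormedAddCommGroup hpd
  let := (diagonal θ).toSeminormedAddCommGroup hpd.posSemidef
  let := (diagonal θ).toInnerProductSpace hpd.posSemidef
  have hinner (x y : ι → ℝ) : ⟪x, y⟫_ℝ = ∑ i, x i * y i * θ i := by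
    change ∑ _, _ = _
    simp only [mulVec_diagonal, star_trivial]
    exact Finset.sum_congr rfl fun i _ ↦ by ring
  have hsymm : P.mulVecLin.IsSymmetric := fun x y ↦ by
    simpa only [hinner, mulVecLin_apply] using sum_mulVec_mul_eq_of_reversible hrev x y
  have hle (x : ι → ℝ) : ⟪P.mulVecLin x, x⟫_ℝ ≤ ⟪x, x⟫_ℝ := by
    simpa only [hinner, mulVecLin_apply] using
      sum_mulVec_mul_self_le_of_reversible (fun i ↦ (hθ i).le) hP hrev x
  have hfix := eigenspace_mulVecLin_one_eq_span_one hP hirr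
  have hmem (x : ι → ℝ) : x ∈ (eigenspace P.mulVecLin 1)ᗮ ↔ ∑ i, x i * θ i = 0 := by
    simp only [hfix, Submodule.mem_orthogonal_singleton_iff_inner_left, hinner, Pi.one_apply,
      mul_one]
  obtain ⟨c, hc, hR, hV⟩ := exists_isGreatest_unitRayleighValues_unitAsymptoticVariances hsymm hle
    (hfix.trans_ne span_one_ne_top)
  simp only [unitRayleighValues, hmem, hinner, mulVecLin_apply] at hR
  simp only [unitAsymptoticVariances, hmem, hinner, mulVecLin_apply] at hV
  obtain rfl : lam2 = c := hlam2.trans hR.csSup_eq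
  simpa only [sub_mulVec, one_mulVec] using And.intro hc hV

end Stochastic

/-- **Worst-case asymptotic variance of a reversible chain via the second eigenvalue.**
Let `θ` be a probability vector on `n + 2 ≥ 2` states (positive, nondecreasing) and let
`P` be an irreducible row-stochastic matrix reversible w.r.t. `θ`. Set
`λ₂ = sup { ⟨Px, x⟩_θ : ⟨x, 𝟙⟩_θ = 0, ‖x‖_θ = 1 }` (so `λ₂ < 1`). Then the supremum of
the asymptotic variance `ν(f, P) = 2⟨g, f⟩_θ − ⟨f, f⟩_θ` (where `(I − P) g = f`) over
all `θ`-mean-zero `f` with `‖f‖_θ = 1` equals `(1 + λ₂)/(1 − λ₂)`, and this supremum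
is attained. -/
theorem reversible_worst_case_asymptotic_variance
    (n : ℕ) (θ : Fin (n + 2) → ℝ)
    (hθ1 : 0 < θ 0) (hmono : Monotone θ) (hsum : ∑ i, θ i = 1)
    (P : Matrix (Fin (n + 2)) (Fin (n + 2)) ℝ)
    (hnonneg : ∀ i j, 0 ≤ P i j) (hrow : ∀ i, ∑ j, P i j = 1)
    (hrev : ∀ i j, θ i * P i j = θ j * P j i)
    (hirr : ∀ i j, ∃ m : ℕ, 1 ≤ m ∧ 0 < (P ^ m) i j)
    (lam2 : ℝ)
    (hlam2 : lam2 = sSup {r : ℝ | ∃ x : Fin (n + 2) → ℝ,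
      (∑ i, x i * θ i) = 0 ∧ (∑ i, x i * x i * θ i) = 1 ∧
      r = ∑ i, P.mulVec x i * x i * θ i}) :
    lam2 < 1 ∧
    sSup {v : ℝ | ∃ f g : Fin (n + 2) → ℝ,
        (∑ i, f i * θ i) = 0 ∧ (∑ i, f i * f i * θ i) = 1 ∧
        ((1 : Matrix (Fin (n + 2)) (Fin (n + 2)) ℝ) - P).mulVec g = f ∧
        v = 2 * (∑ i, g i * f i * θ i) - 1} = (1 + lam2) / (1 - lam2) ∧
    (∃ f g : Fin (n + 2) → ℝ,
      (∑ i, f i * θ i) = 0 ∧ (∑ i, f i * f i * θ i) = 1 ∧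
      ((1 : Matrix (Fin (n + 2)) (Fin (n + 2)) ℝ) - P).mulVec g = f ∧
      2 * (∑ i, g i * f i * θ i) - 1 = (1 + lam2) / (1 - lam2)) := by
  obtain ⟨hlt, hV⟩ := reversible_worst_case_asymptotic_variance_general
    (fun i ↦ hθ1.trans_le (hmono (Fin.zero_le i)))
    (mem_rowStochastic_iff_sum.2 ⟨hnonneg, hrow⟩) hrev
    ((isIrreducible_iff_exists_pow_pos hnonneg).2 hirr) lam2 hlam2
  obtain ⟨f, g, hf0, hf1, hg, hv⟩ := hV.1
  exact ⟨hlt, hV.csSup_eq, f, g, hf0, hf1, hg, hv.symm⟩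
end

section
/- Let P ∈ ℝ^{n×n} be an irreducible row-stochastic matrix (not necessarily reversible) with invariant distribution θ. Then there exist a θ-mean-zero f ∈ ℝⁿ with ‖f‖_θ = 1 and g ∈ ℝⁿ with (I − P)g = f such that ⟨g, f⟩_θ ≥ θ_n/(θ₁ + θ_n). Equivalently, the worst-case quantity v(P) = sup{ ⟨g, f⟩_θ : f θ-mean-zero, ‖f‖_θ = 1, (I − P)g = f } satisfies v(P) ≥ θ_n/(θ₁ + θ_n). -/
open Matrix

/-!
For two states `a ≠ b`, let `f` be `1 / θ a` at `a`, `-1 / θ b` at `b` and zero elsewhere, and solve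
`(1 - P) g = f`. Since `g` is superharmonic away from `b`, the minimum principle for irreducible
chains puts its minimum at `b`, and the equation at `a` then gives `g a - g b ≥ 1 / θ a`. As
`⟨g, f⟩_θ = g a - g b` and `‖f‖_θ² = 1 / θ a + 1 / θ b`, normalising `f` yields a value of at least
`θ b / (θ a + θ b)`.

The supremum is finite because `⟨g, f⟩_θ = ⟨G f, f⟩_θ` for a linear generalised inverse `G` of
`1 - P`, and `f` ranges over a compact ellipsoid.
-/

section LinearAlgebra

open LinearMap Module

lemma exists_comp_comp_eq_self {K V W : Type*} [DivisionRing K] [AddCommGroup V] [Module K V]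
    [AddCommGroup W] [Module K W] (f : V →ₗ[K] W) : ∃ g : W →ₗ[K] V, f ∘ₗ g ∘ₗ f = f := by
  obtain ⟨s, hs⟩ := f.rangeRestrict.exists_rightInverse_of_surjective f.range_rangeRestrict
  obtain ⟨g, hg⟩ := s.exists_extend
  refine ⟨g, LinearMap.ext fun v ↦ ?_⟩
  have hgs : g (f v) = s (f.rangeRestrict v) := LinearMap.congr_fun hg (f.rangeRestrict v)
  calc f (g (f v)) = f.rangeRestrict (s (f.rangeRestrict v)) := congrArg f hgs
    _ = f v := congrArg Subtype.val (LinearMap.congr_fun hs (f.rangeRestrict v))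

lemma range_eq_ker_of_finrank_ker_le_one {K V : Type*} [Field K] [AddCommGroup V] [Module K V]
    [FiniteDimensional K V] {f : V →ₗ[K] V} {φ : Dual K V} (hφ : φ ≠ 0) (hφf : φ ∘ₗ f = 0)
    (hf : finrank K (ker f) ≤ 1) : range f = ker φ := by
  refine Submodule.eq_of_le_of_finrank_le (range_le_ker_iff.2 hφf) ?_
  have hrank := f.finrank_range_add_finrank_ker
  have hφ_rank := Dual.finrank_ker_add_one_of_ne_zero hφ
  omega

end LinearAlgebra

section MinimumPrinciple

variable {ι R : Type*} [Fintype ι] [Ring R]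

lemma one_sub_mulVec_apply [DecidableEq ι] (P : Matrix ι ι R) (g : ι → R) (i : ι) :
    ((1 - P) *ᵥ g) i = g i - P i ⬝ᵥ g := by
  rw [sub_mulVec, one_mulVec]
  rfl

variable [LinearOrder R] [IsStrictOrderedRing R]

lemma eq_of_dotProduct_le_of_forall_le {w g : ι → R} {m : R} (hw : ∀ i, 0 ≤ w i)
    (hsum : ∑ i, w i = 1) (hm : ∀ i, m ≤ g i) (hle : w ⬝ᵥ g ≤ m) {j : ι} (hj : 0 < w j) :
    g j = m := by
  have hnonneg (i : ι) : 0 ≤ w i * (g i - m) := mul_nonneg (hw i) (sub_nonneg.2 (hm i))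
  have hsum_le : ∑ i, w i * (g i - m) ≤ 0 := by
    simp only [mul_sub, Finset.sum_sub_distrib, ← Finset.sum_mul, hsum, one_mul, sub_nonpos]
    exact hle
  have hzero := (Finset.sum_eq_zero_iff_of_nonneg fun i _ ↦ hnonneg i).1
    (hsum_le.antisymm (Finset.sum_nonneg fun i _ ↦ hnonneg i)) j (Finset.mem_univ j)
  exact sub_eq_zero.1 ((mul_eq_zero.1 hzero).resolve_left hj.ne')

variable [DecidableEq ι] {P : Matrix ι ι R} {g : ι → R} {t : ι}

theorem le_of_one_sub_mulVec_nonneg_off (hP : P.IsIrreducible) (hone : P *ᵥ 1 = 1)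
    (hg : ∀ i, i ≠ t → 0 ≤ ((1 - P) *ᵥ g) i) (i : ι) : g t ≤ g i := by
  have : Nonempty ι := ⟨t⟩
  obtain ⟨k, hk⟩ := Finite.exists_min g
  suffices hkt : g t = g k from hkt ▸ hk i
  by_contra hne
  let : Quiver ι := toQuiver P
  -- The value `g k` propagates along the edges of the chain, hence reaches `t`.
  have hpath (j : ι) (p : Quiver.Path k j) : g j = g k := by
    induction p with
    | nil => rfl
    | @cons l j _ e hl =>
      have hlt : l ≠ t := by
        rintro rfl
        exact hne hl
      have havg : P l ⬝ᵥ g ≤ g k := by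
        simpa only [one_sub_mulVec_apply, sub_nonneg, hl] using hg l hlt
      exact eq_of_dotProduct_le_of_forall_le (hP.nonneg l)
        (sum_row_of_mem_rowStochastic ⟨hP.nonneg, hone⟩ l) hk havg e.down
  obtain ⟨p, -⟩ := hP.connected k t
  exact hne (hpath t p)

lemma one_sub_mulVec_apply_le_sub (hP : P.IsIrreducible) (hone : P *ᵥ 1 = 1)
    (hg : ∀ i, i ≠ t → 0 ≤ ((1 - P) *ᵥ g) i) (i : ι) : ((1 - P) *ᵥ g) i ≤ g i - g t := by
  rw [one_sub_mulVec_apply]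
  refine sub_le_sub_left ?_ _
  calc g t = ∑ j, P i j * g t := by
        rw [← Finset.sum_mul, sum_row_of_mem_rowStochastic ⟨hP.nonneg, hone⟩, one_mul]
    _ ≤ P i ⬝ᵥ g := Finset.sum_le_sum fun j _ ↦
        mul_le_mul_of_nonneg_left (le_of_one_sub_mulVec_nonneg_off hP hone hg j) (hP.nonneg i j)

lemma apply_eq_of_one_sub_mulVec_eq_zero (hP : P.IsIrreducible) (hone : P *ᵥ 1 = 1)
    (hg : (1 - P) *ᵥ g = 0) (i j : ι) : g i = g j := by
  have hle (t k : ι) : g t ≤ g k :=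
    le_of_one_sub_mulVec_nonneg_off hP hone (fun l _ ↦ (congrFun hg l).ge) k
  exact (hle i j).antisymm (hle j i)

end MinimumPrinciple

section Dipole

variable {ι K : Type*} [DecidableEq ι] [Field K]

/-- The `θ`-mean-zero difference of the point masses at `a` and `b`, each written as a density with
respect to `θ`. It is the right-hand side of Poisson's equation that produces the lower bound. -/
def dipole (θ : ι → K) (a b : ι) : ι → K := Pi.single a (θ a)⁻¹ - Pi.single b (θ b)⁻¹

variable {θ : ι → K} {a b : ι}

lemma sum_mul_dipole_mul [Fintype ι] (ha : θ a ≠ 0) (hb : θ b ≠ 0) (h : ι → K) :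
    ∑ i, h i * dipole θ a b i * θ i = h a - h b := by
  simp [dipole, Pi.single_apply, mul_sub, sub_mul, Finset.sum_sub_distrib, ha, hb]

lemma dipole_apply_left (hab : a ≠ b) : dipole θ a b a = (θ a)⁻¹ := by
  simp [dipole, hab]

lemma dipole_apply_right (hab : a ≠ b) : dipole θ a b b = -(θ b)⁻¹ := by
  simp [dipole, hab.symm]

lemma dipole_nonneg [LinearOrder K] [IsStrictOrderedRing K] (ha : 0 ≤ θ a) {i : ι} (hi : i ≠ b) :
    0 ≤ dipole θ a b i := by
  have hsingle : 0 ≤ Pi.single (M := fun _ ↦ K) a (θ a)⁻¹ :=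
    Pi.single_nonneg.2 (inv_nonneg.2 ha)
  simpa [dipole, hi] using hsingle i

end Dipole

section PoissonEquation

variable {ι K : Type*} [Fintype ι] [DecidableEq ι] [Field K] [LinearOrder K]
  [IsStrictOrderedRing K] {P : Matrix ι ι K}

lemma ker_one_sub_mulVecLin (hP : P.IsIrreducible) (hone : P *ᵥ 1 = 1) :
    LinearMap.ker (1 - P).mulVecLin = K ∙ 1 := by
  refine le_antisymm (fun g hg ↦ ?_) ((Submodule.span_singleton_le_iff_mem _ _).2 ?_)
  · cases isEmpty_or_nonempty ι with
    | inl _ => exact Subsingleton.elim g 0 ▸ zero_mem _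
    | inr hι =>
      obtain ⟨i⟩ := hι
      refine Submodule.mem_span_singleton.2 ⟨g i, funext fun j ↦ ?_⟩
      simpa using apply_eq_of_one_sub_mulVec_eq_zero hP hone hg i j
  · simp [hone]

lemma exists_one_sub_mulVec_eq (hP : P.IsIrreducible) (hone : P *ᵥ 1 = 1) {θ f : ι → K}
    (hθ : θ ≠ 0) (hinv : θ ᵥ* P = θ) (hf : θ ⬝ᵥ f = 0) : ∃ g, (1 - P) *ᵥ g = f := by
  let φ : Module.Dual K (ι → K) := dotProductBilin K K θ
  have hφ : φ ≠ 0 := fun h ↦ hθ (dotProduct_eq_zero _ (LinearMap.congr_fun h))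
  have hφP : φ ∘ₗ (1 - P).mulVecLin = 0 := LinearMap.ext fun g ↦ by
    change θ ⬝ᵥ ((1 - P) *ᵥ g) = 0
    rw [dotProduct_mulVec, vecMul_sub, vecMul_one, hinv, sub_self, zero_dotProduct]
  have hker : Module.finrank K (LinearMap.ker (1 - P).mulVecLin) ≤ 1 := by
    rw [ker_one_sub_mulVecLin hP hone]
    exact (finrank_span_le_card _).trans_eq (by simp)
  have hrange := range_eq_ker_of_finrank_ker_le_one hφ hφP hker
  exact (hrange ▸ hf : f ∈ LinearMap.range (1 - P).mulVecLin)

end PoissonEquation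

section PoissonValues

variable {ι : Type*} [Fintype ι]

lemma isCompact_setOf_sum_mul_mul_eq {θ : ι → ℝ} (hθ : ∀ i, 0 < θ i) (c : ℝ) :
    IsCompact {f : ι → ℝ | ∑ i, f i * f i * θ i = c} := by
  refine (isCompact_univ_pi fun i ↦ isCompact_Icc (a := -√(c / θ i)) (b := √(c / θ i))
    ).of_isClosed_subset (isClosed_eq (by fun_prop) continuous_const) fun f hf i _ ↦ ?_
  have hterm : f i * f i * θ i ≤ c := hf ▸ Finset.single_le_sum (f := fun j ↦ f j * f j * θ j)
    (fun j _ ↦ mul_nonneg (mul_self_nonneg _) (hθ j).le) (Finset.mem_univ i)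
  exact abs_le.1 <| Real.abs_le_sqrt (by rwa [sq, le_div_iff₀ (hθ i)])

variable [DecidableEq ι] {P : Matrix ι ι ℝ} {θ : ι → ℝ}

/-- The values `⟨g, f⟩_θ` over the solutions of Poisson's equation `(1 - P) g = f` whose right-hand
side `f` is `θ`-mean-zero with `‖f‖_θ = 1`. The quantity to bound from below is its supremum. -/
def poissonValues (P : Matrix ι ι ℝ) (θ : ι → ℝ) : Set ℝ :=
  {r | ∃ f g : ι → ℝ, ∑ i, f i * θ i = 0 ∧ ∑ i, f i * f i * θ i = 1 ∧
    (1 - P) *ᵥ g = f ∧ r = ∑ i, g i * f i * θ i}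

lemma div_mem_poissonValues {f g : ι → ℝ} (hmean : ∑ i, f i * θ i = 0)
    (hnorm : 0 < ∑ i, f i * f i * θ i) (hg : (1 - P) *ᵥ g = f) :
    (∑ i, g i * f i * θ i) / ∑ i, f i * f i * θ i ∈ poissonValues P θ := by
  set c := ∑ i, f i * f i * θ i with hc
  have hscale (h : ι → ℝ) :
      ∑ i, ((√c)⁻¹ • h) i * ((√c)⁻¹ • f) i * θ i = (∑ i, h i * f i * θ i) / c := by
    rw [Finset.sum_div]
    refine Finset.sum_congr rfl fun i _ ↦ ?_
    simp only [Pi.smul_apply, smul_eq_mul]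
    calc (√c)⁻¹ * h i * ((√c)⁻¹ * f i) * θ i = h i * f i * θ i / √c ^ 2 := by ring
      _ = h i * f i * θ i / c := by rw [Real.sq_sqrt hnorm.le]
  refine ⟨(√c)⁻¹ • f, (√c)⁻¹ • g, ?_, ?_, by rw [mulVec_smul, hg], (hscale g).symm⟩
  · simp only [Pi.smul_apply, smul_eq_mul, mul_assoc, ← Finset.mul_sum, hmean, mul_zero]
  · rw [hscale, ← hc, div_self hnorm.ne']

theorem exists_mem_poissonValues_ge (hP : P.IsIrreducible) (hone : P *ᵥ 1 = 1)
    (hθ : ∀ i, 0 < θ i) (hinv : θ ᵥ* P = θ) {a b : ι} (hab : a ≠ b) :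
    ∃ r ∈ poissonValues P θ, θ b / (θ a + θ b) ≤ r := by
  have ha := hθ a
  have hb := hθ b
  let f := dipole θ a b
  have hpair : ∀ h : ι → ℝ, ∑ i, h i * f i * θ i = h a - h b := sum_mul_dipole_mul ha.ne' hb.ne'
  have hmean : ∑ i, f i * θ i = 0 := by simpa using hpair 1
  have hfa : f a = (θ a)⁻¹ := dipole_apply_left hab
  have hfb : f b = -(θ b)⁻¹ := dipole_apply_right hab
  have hnorm : ∑ i, f i * f i * θ i = (θ a)⁻¹ + (θ b)⁻¹ := by
    rw [hpair, hfa, hfb, sub_neg_eq_add]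
  have hf_nonneg (i : ι) (hi : i ≠ b) : 0 ≤ f i := dipole_nonneg ha.le hi
  obtain ⟨g, hg⟩ := exists_one_sub_mulVec_eq hP hone (fun h ↦ ha.ne' (congrFun h a)) hinv
    ((dotProduct_comm θ f).trans hmean)
  have hgap : (θ a)⁻¹ ≤ g a - g b := by
    rw [← hfa, ← hg]
    exact one_sub_mulVec_apply_le_sub hP hone (hg ▸ hf_nonneg) a
  refine ⟨_, div_mem_poissonValues hmean (by rw [hnorm]; positivity) hg, ?_⟩
  rw [hpair, hnorm]
  calc θ b / (θ a + θ b) = (θ a)⁻¹ / ((θ a)⁻¹ + (θ b)⁻¹) := by field_simp; ring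
    _ ≤ (g a - g b) / ((θ a)⁻¹ + (θ b)⁻¹) := by gcongr

theorem bddAbove_poissonValues (hP : P.IsIrreducible) (hone : P *ᵥ 1 = 1) (hθ : ∀ i, 0 < θ i) :
    BddAbove (poissonValues P θ) := by
  obtain ⟨G, hG⟩ := exists_comp_comp_eq_self (1 - P).mulVecLin
  have hcont : Continuous fun f : ι → ℝ ↦ ∑ i, G f i * f i * θ i := by
    have := G.continuous_of_finiteDimensional
    fun_prop
  refine ((isCompact_setOf_sum_mul_mul_eq hθ 1).bddAbove_image hcont.continuousOn).mono ?_
  rintro r ⟨f, g, hmean, hnorm, hg, rfl⟩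
  refine ⟨f, hnorm, ?_⟩
  have hGf : (1 - P) *ᵥ G f = f := hg ▸ LinearMap.congr_fun hG g
  have hker : G f - g ∈ LinearMap.ker (1 - P).mulVecLin := by
    rw [LinearMap.mem_ker, mulVecLin_apply, mulVec_sub, hGf, hg, sub_self]
  rw [ker_one_sub_mulVecLin hP hone] at hker
  obtain ⟨c, hc⟩ := Submodule.mem_span_singleton.1 hker
  have hG_add : G f = c • 1 + g := eq_add_of_sub_eq hc.symm
  simp only [hG_add, Pi.add_apply, Pi.smul_apply, Pi.one_apply, smul_eq_mul, mul_one, add_mul,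
    Finset.sum_add_distrib, mul_assoc, ← Finset.mul_sum, hmean, mul_zero, zero_add]

end PoissonValues

theorem irreducible_fundamental_form_lower_bound_general {ι : Type*} [Fintype ι] [DecidableEq ι]
    {P : Matrix ι ι ℝ} {θ : ι → ℝ} (hP : P.IsIrreducible) (hone : P *ᵥ 1 = 1)
    (hθ : ∀ i, 0 < θ i) (hinv : θ ᵥ* P = θ) {a b : ι} (hab : a ≠ b) :
    (∃ f g : ι → ℝ, ∑ i, f i * θ i = 0 ∧ ∑ i, f i * f i * θ i = 1 ∧ (1 - P) *ᵥ g = f ∧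
      θ b / (θ a + θ b) ≤ ∑ i, g i * f i * θ i) ∧
    θ b / (θ a + θ b) ≤ sSup (poissonValues P θ) := by
  obtain ⟨r, hr, hle⟩ := exists_mem_poissonValues_ge hP hone hθ hinv hab
  have hsup := hle.trans (le_csSup (bddAbove_poissonValues hP hone hθ) hr)
  obtain ⟨f, g, hmean, hnorm, hg, rfl⟩ := hr
  exact ⟨⟨f, g, hmean, hnorm, hg, hle⟩, hsup⟩

/-- **Lower bound `θ_n/(θ₁ + θ_n)` for irreducible (not necessarily reversible) chains.**
Let `θ` be a probability vector on `n + 2 ≥ 2` states (positive, nondecreasing) and let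
`P` be an irreducible row-stochastic matrix with invariant distribution `θ`. Then there
exist a `θ`-mean-zero `f` with `‖f‖_θ = 1` and `g` with `(I − P) g = f` such that
`⟨g, f⟩_θ ≥ θ_n/(θ₁ + θ_n)`; equivalently
`v(P) = sup { ⟨g, f⟩_θ : f mean-zero, ‖f‖_θ = 1, (I − P) g = f } ≥ θ_n/(θ₁ + θ_n)`. -/
theorem irreducible_fundamental_form_lower_bound
    (n : ℕ) (θ : Fin (n + 2) → ℝ)
    (hθ1 : 0 < θ 0) (hmono : Monotone θ) (hsum : ∑ i, θ i = 1)
    (P : Matrix (Fin (n + 2)) (Fin (n + 2)) ℝ)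
    (hnonneg : ∀ i j, 0 ≤ P i j) (hrow : ∀ i, ∑ j, P i j = 1)
    (hinv : ∀ j, ∑ i, θ i * P i j = θ j)
    (hirr : ∀ i j, ∃ m : ℕ, 1 ≤ m ∧ 0 < (P ^ m) i j) :
    (∃ f g : Fin (n + 2) → ℝ,
      (∑ i, f i * θ i) = 0 ∧ (∑ i, f i * f i * θ i) = 1 ∧
      ((1 : Matrix (Fin (n + 2)) (Fin (n + 2)) ℝ) - P).mulVec g = f ∧
      θ (Fin.last (n + 1)) / (θ 0 + θ (Fin.last (n + 1))) ≤ ∑ i, g i * f i * θ i) ∧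
    θ (Fin.last (n + 1)) / (θ 0 + θ (Fin.last (n + 1))) ≤
      sSup {r : ℝ | ∃ f g : Fin (n + 2) → ℝ,
        (∑ i, f i * θ i) = 0 ∧ (∑ i, f i * f i * θ i) = 1 ∧
        ((1 : Matrix (Fin (n + 2)) (Fin (n + 2)) ℝ) - P).mulVec g = f ∧
        r = ∑ i, g i * f i * θ i} := by
  exact irreducible_fundamental_form_lower_bound_general
    ((isIrreducible_iff_exists_pow_pos hnonneg).2 hirr)
    (mem_rowStochastic_iff_sum.2 ⟨hnonneg, hrow⟩).2
    (fun i ↦ hθ1.trans_le (hmono (Fin.zero_le i))) (funext hinv) Fin.last_pos.ne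
end
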